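/- arXiv:1601.07109 — 4 statements merged into one kernel-verified Lean document; each statement's English description precedes it below -/
import Mathlib

section
/- Let k ≥ 4. The restriction map res, sending a function c on the set of pairwise distinct k-tuples of points of S¹ to the function res(c)(λ₁, ..., λ_{k−3}) = c(−i, 1, −1, 𝒞(λ₁), ..., 𝒞(λ_{k−3})) on P_{k−3} = {(λ₁,...,λ_{k−3}) : 0 < λ₁ < ⋯ < λ_{k−3} < 1}, is a bijection from the set of real-valued G-invariant alternating functions on pairwise distinct k-tuples of points of S¹ onto the set of functions f : P_{k−3} → ℝ satisfying f(λ₁, ..., λ_{k−3}) = (−1)^{k+1}·f(1−λ_{k−3}, (1−λ_{k−3})/(1−λ₁), ..., (1−λ_{k−3})/(1−λ_{k−4})). -/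
open Complex

/-- The cross ratio `[z₁:z₂:z₃:z₄] = (z₁-z₃)(z₂-z₄)/((z₂-z₃)(z₁-z₄))`. -/
noncomputable def crossRatio (z₁ z₂ z₃ z₄ : ℂ) : ℂ :=
  ((z₁ - z₃) * (z₂ - z₄)) / ((z₂ - z₃) * (z₁ - z₄))

/-- A tuple `(z₁, …, z_k)` of points of `S¹` is *cyclically oriented* if it can be written as
`z_j = e^{iθ_j}` with `θ₁ < θ₂ < ⋯ < θ_k < θ₁ + 2π`. -/
def CyclicallyOriented {k : ℕ} (z : Fin k → ℂ) : Prop :=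
  ∃ θ : Fin k → ℝ, StrictMono θ ∧ (∀ i j : Fin k, θ j < θ i + 2 * Real.pi) ∧
    ∀ j, z j = Complex.exp (θ j * Complex.I)

/-- The Cayley transform `𝒞(z) = (z-i)/(z+i)`. -/
noncomputable def cayley (z : ℂ) : ℂ := (z - Complex.I) / (z + Complex.I)

/-- The tuple `(-i, 1, -1, 𝒞(λ₁), …, 𝒞(λ_{k-3}))` (0-indexed). -/
noncomputable def stdTuple (k : ℕ) (lam : Fin (k - 3) → ℝ) : Fin k → ℂ := fun j =>
  if h0 : (j : ℕ) = 0 then -Complex.I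
  else if h1 : (j : ℕ) = 1 then 1
  else if h2 : (j : ℕ) = 2 then -1
  else cayley ((lam ⟨(j : ℕ) - 3, by have := j.isLt; omega⟩ : ℝ) : ℂ)

/-- The Möbius transformation `z ↦ (az+b)/(b̄z+ā)` given by an element of `PU(1,1)`. -/
noncomputable def mobius (a b z : ℂ) : ℂ :=
  (a * z + b) / ((starRingEnd ℂ) b * z + (starRingEnd ℂ) a)

/-- A tuple of pairwise distinct points of the unit circle `S¹`. -/
def OnCircleInj {k : ℕ} (z : Fin k → ℂ) : Prop :=
  (∀ j, ‖z j‖ = 1) ∧ Function.Injective z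

/-- `c` is alternating on pairwise distinct tuples of points of `S¹`. -/
def IsAlternating {k : ℕ} (c : (Fin k → ℂ) → ℝ) : Prop :=
  ∀ (σ : Equiv.Perm (Fin k)) (z : Fin k → ℂ), OnCircleInj z →
    c (fun i => z (σ i)) = (Equiv.Perm.sign σ : ℤ) * c z

/-- `c` is invariant under the diagonal action of `G = PU(1,1)` on tuples of points of `S¹`. -/
def IsGInvariant {k : ℕ} (c : (Fin k → ℂ) → ℝ) : Prop :=
  ∀ a b : ℂ, ‖a‖ ^ 2 - ‖b‖ ^ 2 = 1 →
    ∀ z : Fin k → ℂ, OnCircleInj z → c (fun i => mobius a b (z i)) = c z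

/-- `0 < λ₁ < ⋯ < λ_n < 1`, i.e. membership in the parameter space `P_n`. -/
def InParam {n : ℕ} (lam : Fin n → ℝ) : Prop :=
  (∀ j, 0 < lam j) ∧ StrictMono lam ∧ (∀ j, lam j < 1)

/-- The transformation `(λ₁, …, λ_{k-3}) ↦ (1-λ_{k-3}, (1-λ_{k-3})/(1-λ₁), …,
(1-λ_{k-3})/(1-λ_{k-4}))` of the parameter space (0-indexed). -/
noncomputable def shiftP (k : ℕ) (lam : Fin (k - 3) → ℝ) : Fin (k - 3) → ℝ := fun j =>
  if (j : ℕ) = 0 then 1 - lam ⟨k - 3 - 1, by have := j.isLt; omega⟩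
  else (1 - lam ⟨k - 3 - 1, by have := j.isLt; omega⟩) /
    (1 - lam ⟨(j : ℕ) - 1, by have := j.isLt; omega⟩)

/-!
A tuple of distinct points of `S¹` can be put into counterclockwise order, uniquely up to rotation
of the indices. An element of `G` then moves its first three points to `-i, 1, -1`, and hence the
others to `𝒞(λ₁), …, 𝒞(λ_{k-3})`, where the `λⱼ` are cross ratios of the tuple. As `G` preserves
cross ratios and orientation, `λ` lies in `P_{k-3}` and depends only on the `G`-orbit. So a
`G`-invariant alternating function is determined by its restriction, and the only constraint on the
restriction comes from the rotation, a permutation of sign `(-1)^{k+1}` which changes `λ` into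
`shiftP k λ`.
-/

open scoped ComplexConjugate BigOperators
open Equiv (Perm)

lemma ne_zero_of_norm_eq_one {E : Type*} [SeminormedAddGroup E] {x : E} (hx : ‖x‖ = 1) : x ≠ 0 :=
  ne_zero_of_norm_ne_zero (hx ▸ one_ne_zero)

section SignedArea

/-- The signed area of the triangle `x y z`. A triple of points of `S¹` is positively oriented
exactly when this is positive. -/
noncomputable def signedArea (x y z : ℂ) : ℝ := (conj (y - x) * (z - x)).im / 2

lemma signedArea_rotate (x y z : ℂ) : signedArea y z x = signedArea x y z := by
  simp only [signedArea, map_sub, mul_im, sub_re, sub_im, conj_re, conj_im]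
  ring

lemma signedArea_swap (x y z : ℂ) : signedArea x z y = -signedArea x y z := by
  simp only [signedArea, map_sub, mul_im, sub_re, sub_im, conj_re, conj_im]
  ring

lemma pairwise_ne_of_signedArea_pos {x y z : ℂ} (h : 0 < signedArea x y z) :
    x ≠ y ∧ y ≠ z ∧ z ≠ x := by
  have hne {u v w : ℂ} (huvw : 0 < signedArea u v w) : u ≠ v := by
    rintro rfl
    simp [signedArea] at huvw
  exact ⟨hne h, hne (signedArea_rotate x y z ▸ h), hne (signedArea_rotate z x y ▸ h)⟩

lemma signedArea_exp (α β γ : ℝ) :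
    signedArea (exp (α * I)) (exp (β * I)) (exp (γ * I)) =
      2 * Real.sin ((β - α) / 2) * Real.sin ((γ - β) / 2) * Real.sin ((γ - α) / 2) := by
  have harea : signedArea (exp (α * I)) (exp (β * I)) (exp (γ * I)) =
      (Real.sin (β - α) + Real.sin (γ - β) - Real.sin (γ - α)) / 2 := by
    simp only [signedArea, map_sub, mul_im, sub_re, sub_im, conj_re, conj_im,
      exp_ofReal_mul_I_re, exp_ofReal_mul_I_im, Real.sin_sub]
    ring
  obtain ⟨p, rfl⟩ : ∃ p, β = α + 2 * p := ⟨(β - α) / 2, by ring⟩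
  obtain ⟨q, rfl⟩ : ∃ q, γ = α + 2 * p + 2 * q := ⟨(γ - (α + 2 * p)) / 2, by ring⟩
  rw [harea, show α + 2 * p - α = 2 * p by ring,
    show α + 2 * p + 2 * q - (α + 2 * p) = 2 * q by ring,
    show α + 2 * p + 2 * q - α = 2 * p + 2 * q by ring,
    show 2 * p / 2 = p by ring, show 2 * q / 2 = q by ring,
    show (2 * p + 2 * q) / 2 = p + q by ring]
  simp only [Real.sin_add, Real.sin_two_mul, Real.cos_two_mul', Real.cos_sq']
  ring

lemma ofReal_signedArea {x y z : ℂ} (hx : ‖x‖ = 1) (hy : ‖y‖ = 1) (hz : ‖z‖ = 1) :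
    (signedArea x y z : ℂ) = I / 4 * ((x - y) * (y - z) * (z - x) / (x * y * z)) := by
  have hx0 : x ≠ 0 := ne_zero_of_norm_eq_one hx
  have hy0 : y ≠ 0 := ne_zero_of_norm_eq_one hy
  have hz0 : z ≠ 0 := ne_zero_of_norm_eq_one hz
  have him (u : ℂ) : ((u.im / 2 : ℝ) : ℂ) = I / 4 * (conj u - u) := by
    rw [← neg_sub u, sub_conj]
    push_cast
    linear_combination (u.im / 2 : ℂ) * I_sq
  rw [signedArea, him, map_mul, conj_conj, map_sub, map_sub, ← inv_eq_conj hx, ← inv_eq_conj hy,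
    ← inv_eq_conj hz]
  field_simp
  ring

end SignedArea

section CrossRatio

lemma crossRatio_map_of_sub_eq {s : Set ℂ} {f r : ℂ → ℂ} {κ : ℂ} (hκ : κ ≠ 0)
    (hr : ∀ x ∈ s, r x ≠ 0) (hf : ∀ x ∈ s, ∀ y ∈ s, f x - f y = κ * (r x * r y) * (x - y))
    {w x y z : ℂ} (hw : w ∈ s) (hx : x ∈ s) (hy : y ∈ s) (hz : z ∈ s) :
    crossRatio (f w) (f x) (f y) (f z) = crossRatio w x y z := by
  have hscale : κ ^ 2 * (r w * r x * r y * r z) ≠ 0 :=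
    mul_ne_zero (pow_ne_zero 2 hκ)
      (mul_ne_zero (mul_ne_zero (mul_ne_zero (hr w hw) (hr x hx)) (hr y hy)) (hr z hz))
  rw [crossRatio, crossRatio, hf w hw y hy, hf x hx z hz, hf x hx y hy, hf w hw z hz,
    ← mul_div_mul_left ((w - y) * (x - z)) _ hscale]
  congr 1 <;> ring

lemma ofReal_re_crossRatio {w x y z : ℂ} (hw : ‖w‖ = 1) (hx : ‖x‖ = 1) (hy : ‖y‖ = 1)
    (hz : ‖z‖ = 1) : ((crossRatio w x y z).re : ℂ) = crossRatio w x y z := by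
  have hconj_sub (u : ℂ) (hu : ‖u‖ = 1) (v : ℂ) (hv : ‖v‖ = 1) :
      conj u - conj v = -1 * (u⁻¹ * v⁻¹) * (u - v) := by
    rw [← inv_eq_conj hu, ← inv_eq_conj hv]
    field_simp [ne_zero_of_norm_eq_one hu, ne_zero_of_norm_eq_one hv]
    ring
  rw [← conj_eq_iff_re]
  calc conj (crossRatio w x y z)
      = crossRatio (conj w) (conj x) (conj y) (conj z) := by simp [crossRatio]
    _ = crossRatio w x y z :=
      crossRatio_map_of_sub_eq (s := {u | ‖u‖ = 1}) (neg_ne_zero.mpr one_ne_zero)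
        (fun u hu => inv_ne_zero (ne_zero_of_norm_eq_one hu)) hconj_sub hw hx hy hz

end CrossRatio

section Mobius

variable {a b : ℂ}

lemma mobius_denom_ne_zero (hab : ‖a‖ ^ 2 - ‖b‖ ^ 2 = 1) {z : ℂ} (hz : ‖z‖ = 1) :
    conj b * z + conj a ≠ 0 := by
  intro h
  have hnorm : ‖b‖ = ‖a‖ := by
    simpa [hz] using congrArg norm (eq_neg_of_add_eq_zero_left h)
  simp [hnorm] at hab

lemma mobius_eq_mul_conj_div {z : ℂ} (hz : ‖z‖ = 1) :
    mobius a b z = z * conj (conj b * z + conj a) / (conj b * z + conj a) := by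
  have hz0 : z ≠ 0 := ne_zero_of_norm_eq_one hz
  rw [mobius, map_add, map_mul, conj_conj, conj_conj, ← inv_eq_conj hz]
  field_simp
  ring_nf

lemma norm_mobius (hab : ‖a‖ ^ 2 - ‖b‖ ^ 2 = 1) {z : ℂ} (hz : ‖z‖ = 1) : ‖mobius a b z‖ = 1 := by
  rw [mobius_eq_mul_conj_div hz, norm_div, norm_mul, norm_conj, hz, one_mul,
    div_self (norm_ne_zero_iff.mpr (mobius_denom_ne_zero hab hz))]

lemma mobius_sub_mobius (hab : ‖a‖ ^ 2 - ‖b‖ ^ 2 = 1) {z w : ℂ} (hz : ‖z‖ = 1) (hw : ‖w‖ = 1) :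
    mobius a b z - mobius a b w = (z - w) / ((conj b * z + conj a) * (conj b * w + conj a)) := by
  have hdet : a * conj a - b * conj b = 1 := by
    rw [mul_conj', mul_conj']
    exact_mod_cast hab
  rw [mobius, mobius, div_sub_div _ _ (mobius_denom_ne_zero hab hz) (mobius_denom_ne_zero hab hw)]
  congr 1
  linear_combination (z - w) * hdet

lemma crossRatio_mobius (hab : ‖a‖ ^ 2 - ‖b‖ ^ 2 = 1) {w x y z : ℂ}
    (hw : ‖w‖ = 1) (hx : ‖x‖ = 1) (hy : ‖y‖ = 1) (hz : ‖z‖ = 1) :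
    crossRatio (mobius a b w) (mobius a b x) (mobius a b y) (mobius a b z) =
      crossRatio w x y z := by
  refine crossRatio_map_of_sub_eq (s := {u | ‖u‖ = 1}) (r := fun u => (conj b * u + conj a)⁻¹)
    one_ne_zero (fun u hu => inv_ne_zero (mobius_denom_ne_zero hab hu))
    (fun u hu v hv => ?_) hw hx hy hz
  rw [mobius_sub_mobius hab hu hv, div_eq_inv_mul, mul_inv, one_mul]

lemma signedArea_mobius (hab : ‖a‖ ^ 2 - ‖b‖ ^ 2 = 1) {x y z : ℂ}
    (hx : ‖x‖ = 1) (hy : ‖y‖ = 1) (hz : ‖z‖ = 1) :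
    signedArea (mobius a b x) (mobius a b y) (mobius a b z) = signedArea x y z /
      (normSq (conj b * x + conj a) * normSq (conj b * y + conj a) *
        normSq (conj b * z + conj a)) := by
  have hx' := mobius_denom_ne_zero hab hx
  have hy' := mobius_denom_ne_zero hab hy
  have hz' := mobius_denom_ne_zero hab hz
  have hx0 : x ≠ 0 := ne_zero_of_norm_eq_one hx
  have hy0 : y ≠ 0 := ne_zero_of_norm_eq_one hy
  have hz0 : z ≠ 0 := ne_zero_of_norm_eq_one hz
  apply ofReal_injective
  push_cast [normSq_eq_conj_mul_self]
  rw [ofReal_signedArea hx hy hz,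
    ofReal_signedArea (norm_mobius hab hx) (norm_mobius hab hy) (norm_mobius hab hz),
    mobius_sub_mobius hab hx hy, mobius_sub_mobius hab hy hz, mobius_sub_mobius hab hz hx,
    mobius_eq_mul_conj_div hx, mobius_eq_mul_conj_div hy, mobius_eq_mul_conj_div hz]
  generalize conj b * x + conj a = u at *
  generalize conj b * y + conj a = v at *
  generalize conj b * z + conj a = w at *
  have hu : conj u ≠ 0 := (map_ne_zero _).mpr hx'
  have hv : conj v ≠ 0 := (map_ne_zero _).mpr hy'
  have hw : conj w ≠ 0 := (map_ne_zero _).mpr hz'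
  field_simp

lemma signedArea_mobius_pos_iff (hab : ‖a‖ ^ 2 - ‖b‖ ^ 2 = 1) {x y z : ℂ}
    (hx : ‖x‖ = 1) (hy : ‖y‖ = 1) (hz : ‖z‖ = 1) :
    0 < signedArea (mobius a b x) (mobius a b y) (mobius a b z) ↔ 0 < signedArea x y z := by
  rw [signedArea_mobius hab hx hy hz, div_pos_iff_of_pos_right]
  have hx' := normSq_pos.mpr (mobius_denom_ne_zero hab hx)
  have hy' := normSq_pos.mpr (mobius_denom_ne_zero hab hy)
  have hz' := normSq_pos.mpr (mobius_denom_ne_zero hab hz)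
  positivity

end Mobius

section Normalization

lemma exists_sq_eq_of_norm_eq_one {u : ℂ} (hu : ‖u‖ = 1) : ∃ s : ℂ, ‖s‖ = 1 ∧ s ^ 2 = u := by
  obtain ⟨s, hs⟩ := IsAlgClosed.exists_pow_nat_eq u two_pos
  refine ⟨s, ?_, hs⟩
  rw [← pow_eq_one_iff_of_nonneg (norm_nonneg s) two_ne_zero, ← norm_pow, hs, hu]

/- Clearing denominators in `cayley (crossRatio w x z y)` gives a Möbius transformation of `w`
with coefficients `p - iq` and `-(zp - iyq)`, where `p = x - y` and `q = x - z`. Dividing them by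
a square root of `xyz` puts it into the form `(aw + b)/(b̄w + ā)`, with determinant
`8 * signedArea x y z`. -/
lemma exists_mobius_eq_div {x y z : ℂ} (hx : ‖x‖ = 1) (hy : ‖y‖ = 1) (hz : ‖z‖ = 1)
    (h : 0 < signedArea x y z) :
    ∃ a b : ℂ, ‖a‖ ^ 2 - ‖b‖ ^ 2 = 1 ∧ ∀ w, mobius a b w =
      ((w - z) * (x - y) - (x - z) * (w - y) * I) /
        ((w - z) * (x - y) + (x - z) * (w - y) * I) := by
  have hx0 : x ≠ 0 := ne_zero_of_norm_eq_one hx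
  have hy0 : y ≠ 0 := ne_zero_of_norm_eq_one hy
  have hz0 : z ≠ 0 := ne_zero_of_norm_eq_one hz
  obtain ⟨s, hs1, hs⟩ := exists_sq_eq_of_norm_eq_one (u := x * y * z) (by simp [hx, hy, hz])
  have hs0 : s ≠ 0 := ne_zero_of_norm_eq_one hs1
  obtain ⟨t, ht⟩ : ∃ t : ℝ, (t : ℂ) ^ 2 * (8 * signedArea x y z) = 1 := by
    refine ⟨(√(8 * signedArea x y z))⁻¹, ?_⟩
    norm_cast
    rw [inv_pow, Real.sq_sqrt (by positivity), inv_mul_cancel₀ (by positivity)]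
  have ht0 : (t : ℂ) ≠ 0 := ne_zero_pow two_ne_zero (left_ne_zero_of_mul_eq_one ht)
  set a : ℂ := t / s * ((x - y) - (x - z) * I) with ha
  set b : ℂ := -(t / s) * (z * (x - y) - y * (x - z) * I) with hb
  have hconj_a : conj a = -(t / s) * (z * (x - y) + y * (x - z) * I) := by
    simp only [ha, map_mul, map_div₀, map_sub, conj_ofReal, conj_I, ← inv_eq_conj hs1,
      ← inv_eq_conj hx, ← inv_eq_conj hy, ← inv_eq_conj hz]
    field_simp
    grind
  have hconj_b : conj b = t / s * ((x - y) + (x - z) * I) := by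
    simp only [hb, map_mul, map_div₀, map_sub, map_neg, conj_ofReal, conj_I, ← inv_eq_conj hs1,
      ← inv_eq_conj hx, ← inv_eq_conj hy, ← inv_eq_conj hz]
    field_simp
    grind
  refine ⟨a, b, ?_, fun w => ?_⟩
  · apply ofReal_injective
    push_cast
    rw [← mul_conj', ← mul_conj', hconj_a, hconj_b, ha, hb, ← ht, ofReal_signedArea hx hy hz, ← hs]
    field_simp
    ring
  · rw [mobius, hconj_a, hconj_b, ha, hb,
      ← mul_div_mul_left ((w - z) * (x - y) - (x - z) * (w - y) * I) _ (div_ne_zero ht0 hs0)]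
    congr 1 <;> ring

lemma exists_mobius_eq_cayley_crossRatio {x y z : ℂ} (hx : ‖x‖ = 1) (hy : ‖y‖ = 1)
    (hz : ‖z‖ = 1) (h : 0 < signedArea x y z) :
    ∃ a b : ℂ, ‖a‖ ^ 2 - ‖b‖ ^ 2 = 1 ∧ mobius a b y = 1 ∧
      ∀ w, w ≠ y → mobius a b w = cayley (crossRatio w x z y) := by
  obtain ⟨a, b, hab, hmobius⟩ := exists_mobius_eq_div hx hy hz h
  obtain ⟨hxy, hyz, hzx⟩ := pairwise_ne_of_signedArea_pos h
  refine ⟨a, b, hab, ?_, fun w hw => ?_⟩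
  · rw [hmobius]
    simp [sub_ne_zero.mpr hxy, sub_ne_zero.mpr hyz]
  · have hden : (x - z) * (w - y) ≠ 0 :=
      mul_ne_zero (sub_ne_zero.mpr hzx.symm) (sub_ne_zero.mpr hw)
    rw [hmobius, cayley, crossRatio, div_sub' hden, div_add' _ _ _ hden,
      div_div_div_cancel_right₀ hden, mul_comm I]

end Normalization

section Cayley

lemma ofReal_add_I_ne_zero (t : ℝ) : (t : ℂ) + I ≠ 0 := fun h => by
  simpa using congrArg im h

lemma norm_cayley_ofReal (t : ℝ) : ‖cayley t‖ = 1 := by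
  have hconj : (t : ℂ) - I = conj (t + I) := by simp [sub_eq_add_neg]
  rw [cayley, norm_div, hconj, norm_conj, div_self (norm_ne_zero_iff.mpr (ofReal_add_I_ne_zero t))]

lemma cayley_zero : cayley 0 = -1 := by simp [cayley]

lemma cayley_one : cayley 1 = -I := by
  rw [cayley, div_eq_iff (by exact_mod_cast ofReal_add_I_ne_zero 1)]
  linear_combination I_sq

lemma cayley_sub_cayley (s t : ℝ) :
    cayley s - cayley t = 2 * I * (s - t) / ((s + I) * (t + I)) := by
  have hs := ofReal_add_I_ne_zero s
  have ht := ofReal_add_I_ne_zero t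
  rw [cayley, cayley]
  field_simp
  ring

lemma one_sub_cayley (t : ℝ) : 1 - cayley t = 2 * I / (t + I) := by
  have ht := ofReal_add_I_ne_zero t
  rw [cayley]
  field_simp
  ring

lemma crossRatio_cayley_cayley_cayley_one (r s t : ℝ) :
    crossRatio (cayley r) (cayley s) (cayley t) 1 = ((r - t) / (s - t) : ℝ) := by
  have hr := ofReal_add_I_ne_zero r
  have hs := ofReal_add_I_ne_zero s
  have ht := ofReal_add_I_ne_zero t
  have hI := I_ne_zero
  have hscale : (2 * I) ^ 2 / ((r + I) * (s + I) * (t + I)) ≠ 0 := by simp [*]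
  rw [crossRatio, cayley_sub_cayley, cayley_sub_cayley, ← neg_sub 1, ← neg_sub 1 (cayley r),
    one_sub_cayley, one_sub_cayley]
  push_cast
  rw [← mul_div_mul_left ((r : ℂ) - t) _ hscale, ← neg_div_neg_eq]
  congr 1 <;> field_simp

lemma crossRatio_cayley_cayley_one_cayley (r s t : ℝ) :
    crossRatio (cayley r) (cayley s) 1 (cayley t) = ((s - t) / (r - t) : ℝ) := by
  have hr := ofReal_add_I_ne_zero r
  have hs := ofReal_add_I_ne_zero s
  have ht := ofReal_add_I_ne_zero t
  have hI := I_ne_zero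
  have hscale : (2 * I) ^ 2 / ((r + I) * (s + I) * (t + I)) ≠ 0 := by simp [*]
  rw [crossRatio, cayley_sub_cayley, cayley_sub_cayley, ← neg_sub 1, ← neg_sub 1 (cayley s),
    one_sub_cayley, one_sub_cayley]
  push_cast
  rw [← mul_div_mul_left ((s : ℂ) - t) _ hscale, ← neg_div_neg_eq]
  congr 1 <;> field_simp

lemma cayley_ofReal_eq (t : ℝ) :
    cayley t = ((t ^ 2 - 1) / (t ^ 2 + 1) : ℝ) - (2 * t / (t ^ 2 + 1) : ℝ) * I := by
  have ht : (t : ℂ) ^ 2 + 1 ≠ 0 := by exact_mod_cast (by positivity : t ^ 2 + 1 ≠ 0)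
  rw [cayley, div_eq_iff (ofReal_add_I_ne_zero t)]
  push_cast
  field_simp
  linear_combination (2 * t) * I_sq

lemma signedArea_one_cayley_cayley (s t : ℝ) :
    signedArea 1 (cayley s) (cayley t) = 2 * (t - s) / ((s ^ 2 + 1) * (t ^ 2 + 1)) := by
  simp only [signedArea, cayley_ofReal_eq, map_sub, mul_im, mul_re, sub_re, sub_im, conj_re,
    conj_im, ofReal_re, ofReal_im, I_re, I_im, one_re, one_im]
  field_simp
  ring

lemma signedArea_cayley_cayley_cayley (r s t : ℝ) :
    signedArea (cayley r) (cayley s) (cayley t) =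
      2 * ((s - r) * (t - s) * (t - r)) / ((r ^ 2 + 1) * (s ^ 2 + 1) * (t ^ 2 + 1)) := by
  simp only [signedArea, cayley_ofReal_eq, map_sub, mul_im, mul_re, sub_re, sub_im, conj_re,
    conj_im, ofReal_re, ofReal_im, I_re, I_im]
  field_simp
  ring

lemma signedArea_one_cayley_cayley_pos_iff {s t : ℝ} :
    0 < signedArea 1 (cayley s) (cayley t) ↔ s < t := by
  rw [signedArea_one_cayley_cayley, div_pos_iff_of_pos_right (by positivity),
    mul_pos_iff_of_pos_left two_pos, sub_pos]

lemma signedArea_cayley_cayley_cayley_pos {r s t : ℝ} (hrs : r < s) (hst : s < t) :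
    0 < signedArea (cayley r) (cayley s) (cayley t) := by
  rw [signedArea_cayley_cayley_cayley]
  have hprod : 0 < (s - r) * (t - s) * (t - r) :=
    mul_pos (mul_pos (sub_pos.mpr hrs) (sub_pos.mpr hst)) (sub_pos.mpr (hrs.trans hst))
  positivity

end Cayley

section PositivelyOriented

/-- A tuple of points of `S¹` in counterclockwise order, encoded through its increasing triples
rather than through angles as in `CyclicallyOriented`, so that invariance under Möbius
transformations and rotations of the indices can be checked on triples. -/
structure PositivelyOriented {k : ℕ} (z : Fin k → ℂ) : Prop where
  norm_eq_one : ∀ j, ‖z j‖ = 1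
  signedArea_pos : ∀ ⦃i j l⦄, i < j → j < l → 0 < signedArea (z i) (z j) (z l)

lemma CyclicallyOriented.positivelyOriented {k : ℕ} {z : Fin k → ℂ} (hz : CyclicallyOriented z) :
    PositivelyOriented z := by
  obtain ⟨θ, hθ, hlt, hexp⟩ := hz
  have hsin {i j : Fin k} (hij : i < j) : 0 < Real.sin ((θ j - θ i) / 2) :=
    Real.sin_pos_of_pos_of_lt_pi (by linarith [hθ hij]) (by linarith [hlt i j])
  refine ⟨fun j => by rw [hexp, norm_exp_ofReal_mul_I], fun i j l hij hjl => ?_⟩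
  rw [hexp, hexp, hexp, signedArea_exp]
  have := hsin hij
  have := hsin hjl
  have := hsin (hij.trans hjl)
  positivity

lemma OnCircleInj.exists_perm_cyclicallyOriented {k : ℕ} {z : Fin k → ℂ} (hz : OnCircleInj z) :
    ∃ σ : Perm (Fin k), CyclicallyOriented (z ∘ σ) := by
  have harg : Function.Injective fun j => arg (z j) := fun i j hij =>
    hz.2 (Complex.ext_norm_arg ((hz.1 i).trans (hz.1 j).symm) hij)
  set σ := Tuple.sort fun j => arg (z j)
  refine ⟨σ, fun j => arg (z (σ j)), ?_, fun i j => ?_, fun j => ?_⟩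
  · exact (Tuple.monotone_sort _).strictMono_of_injective (harg.comp σ.injective)
  · linarith [neg_pi_lt_arg (z (σ i)), arg_le_pi (z (σ j))]
  · simpa [hz.1] using (norm_mul_exp_arg_mul_I (z (σ j))).symm

lemma OnCircleInj.exists_perm_positivelyOriented {k : ℕ} {z : Fin k → ℂ} (hz : OnCircleInj z) :
    ∃ σ : Perm (Fin k), PositivelyOriented (z ∘ σ) :=
  hz.exists_perm_cyclicallyOriented.imp fun _ => CyclicallyOriented.positivelyOriented

lemma positivelyOriented_mobius_iff {k : ℕ} {a b : ℂ} (hab : ‖a‖ ^ 2 - ‖b‖ ^ 2 = 1)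
    {z : Fin k → ℂ} (hz : ∀ j, ‖z j‖ = 1) :
    PositivelyOriented (fun j => mobius a b (z j)) ↔ PositivelyOriented z := by
  refine ⟨fun h => ⟨hz, fun i j l hij hjl => ?_⟩,
    fun h => ⟨fun j => norm_mobius hab (hz j), fun i j l hij hjl => ?_⟩⟩
  · exact (signedArea_mobius_pos_iff hab (hz i) (hz j) (hz l)).mp (h.signedArea_pos hij hjl)
  · exact (signedArea_mobius_pos_iff hab (hz i) (hz j) (hz l)).mpr (h.signedArea_pos hij hjl)

lemma PositivelyOriented.injective {n : ℕ} {z : Fin (n + 3) → ℂ} (hz : PositivelyOriented z) :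
    Function.Injective z := by
  refine .of_lt_imp_ne fun i j hij => ?_
  rcases (Fin.le_last j).lt_or_eq with hj | rfl
  · exact (pairwise_ne_of_signedArea_pos (hz.signedArea_pos hij hj)).1
  rcases (Fin.zero_le i).lt_or_eq with hi | rfl
  · exact (pairwise_ne_of_signedArea_pos (hz.signedArea_pos hi hij)).2.1
  have h1 : (1 : Fin (n + 3)) < Fin.last (n + 2) := Fin.lt_def.mpr (by simp)
  exact (pairwise_ne_of_signedArea_pos (hz.signedArea_pos Fin.zero_lt_one h1)).2.2.symm

lemma PositivelyOriented.onCircleInj {n : ℕ} {z : Fin (n + 3) → ℂ} (hz : PositivelyOriented z) :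
    OnCircleInj z :=
  ⟨hz.norm_eq_one, hz.injective⟩

end PositivelyOriented

section Rotation

variable {n : ℕ}

lemma inv_finRotate_zero : (finRotate (n + 1))⁻¹ 0 = Fin.last n := by
  rw [Perm.inv_eq_iff_eq, finRotate_last]

lemma inv_finRotate_succ (i : Fin n) : (finRotate (n + 1))⁻¹ i.succ = i.castSucc := by
  rw [Perm.inv_eq_iff_eq, finRotate_apply, Fin.coeSucc_eq_succ]

lemma exists_inv_finRotate_pow_zero_eq (i : Fin (n + 1)) :
    ∃ m : ℕ, ((finRotate (n + 1))⁻¹ ^ m) 0 = i := by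
  induction i using Fin.reverseInduction with
  | last => exact ⟨1, by rw [pow_one, inv_finRotate_zero]⟩
  | cast i ih =>
    obtain ⟨m, hm⟩ := ih
    exact ⟨m + 1, by rw [pow_succ', Perm.mul_apply, hm, inv_finRotate_succ]⟩

lemma positivelyOriented_comp_inv_finRotate_iff {z : Fin (n + 1) → ℂ} :
    PositivelyOriented (z ∘ ⇑(finRotate (n + 1))⁻¹) ↔ PositivelyOriented z := by
  constructor
  · intro h
    have hpos {i j : Fin (n + 1)} {l : Fin n} := h.signedArea_pos (i := i) (j := j) (l := l.succ)
    refine ⟨fun j => by simpa using h.norm_eq_one (finRotate (n + 1) j), fun i j l hij hjl => ?_⟩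
    obtain ⟨i, rfl⟩ := Fin.exists_castSucc_eq.mpr (Fin.ne_last_of_lt hij)
    obtain ⟨j, rfl⟩ := Fin.exists_castSucc_eq.mpr (Fin.ne_last_of_lt hjl)
    have hij' : i.succ < j.succ := by simpa using hij
    cases l using Fin.lastCases with
    | last =>
      have h0ij := hpos i.succ_pos hij'
      rwa [Function.comp_apply, Function.comp_apply, Function.comp_apply, inv_finRotate_zero,
        inv_finRotate_succ, inv_finRotate_succ, ← signedArea_rotate] at h0ij
    | cast l =>
      have hijl := hpos hij' (Fin.succ_lt_succ_iff.mpr (Fin.castSucc_lt_castSucc_iff.mp hjl))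
      rwa [Function.comp_apply, Function.comp_apply, Function.comp_apply, inv_finRotate_succ,
        inv_finRotate_succ, inv_finRotate_succ] at hijl
  · intro h
    refine ⟨fun j => h.norm_eq_one _, fun i j l hij hjl => ?_⟩
    obtain ⟨j, rfl⟩ := Fin.exists_succ_eq.mpr (Fin.ne_zero_of_lt hij)
    obtain ⟨l, rfl⟩ := Fin.exists_succ_eq.mpr (Fin.ne_zero_of_lt hjl)
    have hjl' : j.castSucc < l.castSucc := by simpa using hjl
    simp only [Function.comp_apply, inv_finRotate_succ]
    cases i using Fin.cases with
    | zero =>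
      rw [inv_finRotate_zero, ← signedArea_rotate]
      exact h.signedArea_pos hjl' l.castSucc_lt_last
    | succ i =>
      rw [inv_finRotate_succ]
      exact h.signedArea_pos (by simpa using hij) hjl'

lemma PositivelyOriented.comp_inv_finRotate_pow {z : Fin (n + 1) → ℂ} (hz : PositivelyOriented z)
    (m : ℕ) : PositivelyOriented (z ∘ ⇑((finRotate (n + 1))⁻¹ ^ m)) := by
  induction m with
  | zero => exact hz
  | succ m ih => exact positivelyOriented_comp_inv_finRotate_iff.mpr ih

lemma PositivelyOriented.perm_eq_one {z : Fin (n + 1) → ℂ} (hz : PositivelyOriented z)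
    {σ : Perm (Fin (n + 1))} (hσ : PositivelyOriented (z ∘ σ)) (h0 : σ 0 = 0) : σ = 1 := by
  have hpos {i : Fin (n + 1)} (hi : 0 < i) : 0 < σ i :=
    Fin.pos_iff_ne_zero.mpr fun h => hi.ne' (σ.injective (h.trans h0.symm))
  refine σ.monotone_iff.mp (StrictMono.monotone fun i j hij => ?_)
  rcases (Fin.zero_le i).eq_or_lt with rfl | hi
  · rw [h0]
    exact hpos hij
  by_contra! hle
  have hji : σ j < σ i := hle.lt_of_ne fun h => hij.ne (σ.injective h.symm)
  have hsorted := hσ.signedArea_pos hi hij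
  have hswapped := hz.signedArea_pos (hpos (hi.trans hij)) hji
  simp only [Function.comp_apply, h0] at hsorted
  rw [signedArea_swap] at hswapped
  linarith

lemma PositivelyOriented.exists_perm_eq_inv_finRotate_pow {z : Fin (n + 1) → ℂ}
    (hz : PositivelyOriented z) {σ : Perm (Fin (n + 1))} (hσ : PositivelyOriented (z ∘ σ)) :
    ∃ m : ℕ, σ = (finRotate (n + 1))⁻¹ ^ m := by
  obtain ⟨m, hm⟩ := exists_inv_finRotate_pow_zero_eq (σ 0)
  set ρ := (finRotate (n + 1))⁻¹ ^ m
  refine ⟨m, (inv_mul_eq_one.mp ?_).symm⟩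
  have hρσ : PositivelyOriented ((z ∘ ρ) ∘ ⇑(ρ⁻¹ * σ)) := by
    simpa [Function.comp_def] using hσ
  refine (hz.comp_inv_finRotate_pow m).perm_eq_one hρσ ?_
  rw [Perm.mul_apply, Perm.inv_eq_iff_eq, hm]

end Rotation

section StdTuple

variable {n : ℕ}

lemma strictMono_snoc_iff {α : Type*} [Preorder α] {f : Fin n → α} {a : α} :
    StrictMono (Fin.snoc f a : Fin (n + 1) → α) ↔ StrictMono f ∧ ∀ j, f j < a := by
  refine ⟨fun h => ⟨fun i j hij => ?_, fun j => ?_⟩, fun ⟨hf, ha⟩ i j hij => ?_⟩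
  · simpa using h (Fin.castSucc_lt_castSucc_iff.mpr hij)
  · simpa using h j.castSucc_lt_last
  · obtain ⟨i, rfl⟩ := Fin.exists_castSucc_eq.mpr (Fin.ne_last_of_lt hij)
    cases j using Fin.lastCases with
    | last => simpa using ha i
    | cast j => simpa using hf (Fin.castSucc_lt_castSucc_iff.mp hij)

lemma stdTuple_zero (lam : Fin n → ℝ) : stdTuple (n + 3) lam 0 = cayley (1 : ℝ) := by
  rw [ofReal_one, cayley_one]
  rfl

lemma stdTuple_one (lam : Fin n → ℝ) : stdTuple (n + 3) lam 1 = 1 := rfl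

lemma stdTuple_two (lam : Fin n → ℝ) : stdTuple (n + 3) lam 2 = cayley (0 : ℝ) := by
  rw [ofReal_zero, cayley_zero]
  rfl

lemma stdTuple_succ_succ_succ (lam : Fin n → ℝ) (j : Fin n) :
    stdTuple (n + 3) lam j.succ.succ.succ = cayley (lam j) := rfl

lemma positivelyOriented_cons_one_cayley_iff {t : Fin n → ℝ} :
    PositivelyOriented (Fin.cons 1 fun j => cayley (t j) : Fin (n + 1) → ℂ) ↔ StrictMono t := by
  refine ⟨fun h i j hij => ?_, fun h => ⟨?_, fun i j l hij hjl => ?_⟩⟩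
  · have h0ij := h.signedArea_pos i.succ_pos (Fin.succ_lt_succ_iff.mpr hij)
    simpa [signedArea_one_cayley_cayley_pos_iff] using h0ij
  · exact Fin.cases norm_one fun j => norm_cayley_ofReal (t j)
  · obtain ⟨j, rfl⟩ := Fin.exists_succ_eq.mpr (Fin.ne_zero_of_lt hij)
    obtain ⟨l, rfl⟩ := Fin.exists_succ_eq.mpr (Fin.ne_zero_of_lt hjl)
    have hjl' := h (Fin.succ_lt_succ_iff.mp hjl)
    cases i using Fin.cases with
    | zero => exact signedArea_one_cayley_cayley_pos_iff.mpr hjl'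
    | succ i =>
      exact signedArea_cayley_cayley_cayley_pos (h (Fin.succ_lt_succ_iff.mp hij)) hjl'

/- Since `1 = cayley ∞`, the standard tuple consists of the Cayley transforms of
`1, ∞, 0, λ₁, …, λₙ`. -/
lemma stdTuple_eq_cons_one_cayley_comp_inv_finRotate (lam : Fin n → ℝ) :
    stdTuple (n + 3) lam = (Fin.cons 1 fun j =>
      cayley ((Fin.cons 0 (Fin.snoc lam 1 : Fin (n + 1) → ℝ) : Fin (n + 2) → ℝ) j)) ∘
        ⇑(finRotate (n + 3))⁻¹ := by
  funext j
  refine Fin.cases ?_ (fun j => ?_) j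
  · rw [Function.comp_apply, inv_finRotate_zero, stdTuple_zero, ← Fin.succ_last, Fin.cons_succ,
      ← Fin.succ_last, Fin.cons_succ, Fin.snoc_last]
  · rw [Function.comp_apply, inv_finRotate_succ]
    refine Fin.cases rfl (Fin.cases (stdTuple_two lam) fun j => ?_) j
    rw [stdTuple_succ_succ_succ, ← Fin.succ_castSucc, Fin.cons_succ, ← Fin.succ_castSucc,
      Fin.cons_succ, Fin.snoc_castSucc]

lemma positivelyOriented_stdTuple_iff {lam : Fin n → ℝ} :
    PositivelyOriented (stdTuple (n + 3) lam) ↔ InParam lam := by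
  rw [stdTuple_eq_cons_one_cayley_comp_inv_finRotate, positivelyOriented_comp_inv_finRotate_iff,
    positivelyOriented_cons_one_cayley_iff, Fin.strictMono_cons, strictMono_snoc_iff, InParam,
    Fin.forall_fin_succ']
  simp only [Fin.snoc_castSucc, Fin.snoc_last, zero_lt_one, and_true]

/-- The cross ratios `[z_j : z₁ : z₃ : z₂]`, `j ≥ 4` (1-indexed), of a tuple of points of `S¹`.
They are real there, so nothing is lost by taking real parts. Normalising the first three points
to `(-i, 1, -1)` moves the others to the Cayley transforms of these numbers. -/
noncomputable def crossRatioParam (z : Fin (n + 3) → ℂ) : Fin n → ℝ := fun j =>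
  (crossRatio (z j.succ.succ.succ) (z 0) (z 2) (z 1)).re

lemma crossRatioParam_stdTuple (lam : Fin n → ℝ) :
    crossRatioParam (stdTuple (n + 3) lam) = lam := by
  funext j
  rw [crossRatioParam, stdTuple_zero, stdTuple_one, stdTuple_two, stdTuple_succ_succ_succ,
    crossRatio_cayley_cayley_cayley_one, ofReal_re, sub_zero, sub_zero, div_one]

lemma crossRatioParam_mobius {a b : ℂ} (hab : ‖a‖ ^ 2 - ‖b‖ ^ 2 = 1) {z : Fin (n + 3) → ℂ}
    (hz : ∀ j, ‖z j‖ = 1) : crossRatioParam (fun j => mobius a b (z j)) = crossRatioParam z := by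
  funext j
  rw [crossRatioParam, crossRatio_mobius hab (hz _) (hz _) (hz _) (hz _), crossRatioParam]

lemma PositivelyOriented.exists_mobius_eq_stdTuple {z : Fin (n + 3) → ℂ}
    (hz : PositivelyOriented z) : ∃ a b : ℂ, ‖a‖ ^ 2 - ‖b‖ ^ 2 = 1 ∧
      (fun j => mobius a b (z j)) = stdTuple (n + 3) (crossRatioParam z) := by
  have h012 : 0 < signedArea (z 0) (z 1) (z 2) :=
    hz.signedArea_pos Fin.zero_lt_one (Fin.succ_lt_succ_iff.mpr Fin.zero_lt_one)
  obtain ⟨a, b, hab, hone, hcayley⟩ := exists_mobius_eq_cayley_crossRatio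
    (hz.norm_eq_one 0) (hz.norm_eq_one 1) (hz.norm_eq_one 2) h012
  obtain ⟨h01, h12, h20⟩ := pairwise_ne_of_signedArea_pos h012
  refine ⟨a, b, hab, funext (Fin.cases ?_ (Fin.cases hone (Fin.cases ?_ fun j => ?_)))⟩
  · rw [hcayley _ h01, stdTuple_zero, crossRatio, div_self, ofReal_one]
    exact mul_ne_zero (sub_ne_zero.mpr h20.symm) (sub_ne_zero.mpr h01)
  · change mobius a b (z 2) = stdTuple (n + 3) (crossRatioParam z) 2
    rw [hcayley _ h12.symm, stdTuple_two, crossRatio, sub_self, zero_mul, zero_div, ofReal_zero]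
  · rw [hcayley _ (hz.injective.ne (by simp [Fin.ext_iff])), stdTuple_succ_succ_succ,
      crossRatioParam, ofReal_re_crossRatio (hz.norm_eq_one _) (hz.norm_eq_one _)
        (hz.norm_eq_one _) (hz.norm_eq_one _)]

lemma PositivelyOriented.inParam_crossRatioParam {z : Fin (n + 3) → ℂ}
    (hz : PositivelyOriented z) : InParam (crossRatioParam z) := by
  obtain ⟨a, b, hab, hstd⟩ := hz.exists_mobius_eq_stdTuple
  rw [← positivelyOriented_stdTuple_iff, ← hstd]
  exact (positivelyOriented_mobius_iff hab hz.norm_eq_one).mpr hz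

lemma crossRatioParam_stdTuple_comp_inv_finRotate (lam : Fin n → ℝ) :
    crossRatioParam (stdTuple (n + 3) lam ∘ ⇑(finRotate (n + 3))⁻¹) = shiftP (n + 3) lam := by
  funext j
  cases n with
  | zero => exact j.elim0
  | succ n =>
    have h1 : (finRotate (n + 4))⁻¹ 1 = 0 := inv_finRotate_succ 0
    have h2 : (finRotate (n + 4))⁻¹ 2 = 1 := inv_finRotate_succ 1
    have hlast : Fin.last (n + 3) = (Fin.last n).succ.succ.succ := rfl
    simp only [crossRatioParam, Function.comp_apply, inv_finRotate_zero, inv_finRotate_succ, h1, h2]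
    rw [hlast, stdTuple_zero, stdTuple_one, stdTuple_succ_succ_succ]
    cases j using Fin.cases with
    | zero =>
      change (crossRatio (stdTuple (n + 4) lam 2) _ _ _).re = 1 - lam (Fin.last n)
      rw [stdTuple_two, crossRatio_cayley_cayley_one_cayley, ofReal_re]
      ring
    | succ i =>
      change (crossRatio (cayley (lam i.castSucc)) _ _ _).re =
        (1 - lam (Fin.last n)) / (1 - lam i.castSucc)
      rw [crossRatio_cayley_cayley_one_cayley, ofReal_re, ← neg_div_neg_eq, neg_sub, neg_sub]

lemma PositivelyOriented.crossRatioParam_comp_inv_finRotate {z : Fin (n + 3) → ℂ}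
    (hz : PositivelyOriented z) :
    crossRatioParam (z ∘ ⇑(finRotate (n + 3))⁻¹) = shiftP (n + 3) (crossRatioParam z) := by
  obtain ⟨a, b, hab, hstd⟩ := hz.exists_mobius_eq_stdTuple
  rw [← crossRatioParam_stdTuple_comp_inv_finRotate, ← hstd]
  exact (crossRatioParam_mobius hab fun j => hz.norm_eq_one _).symm

end StdTuple

section Restriction

variable {n : ℕ} {c : (Fin (n + 3) → ℂ) → ℝ}

lemma intCast_sign_inv_finRotate (n : ℕ) :
    (((Perm.sign (finRotate (n + 1))⁻¹ : ℤˣ) : ℤ) : ℝ) = (-1) ^ (n + 2) := by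
  simp [Perm.sign_inv, sign_finRotate, pow_add]

lemma IsGInvariant.apply_eq_apply_stdTuple (hc : IsGInvariant c) {z : Fin (n + 3) → ℂ}
    (hz : PositivelyOriented z) : c z = c (stdTuple (n + 3) (crossRatioParam z)) := by
  obtain ⟨a, b, hab, hstd⟩ := hz.exists_mobius_eq_stdTuple
  rw [← hstd, hc a b hab z hz.onCircleInj]

lemma IsGInvariant.apply_stdTuple_eq_shiftP (hc : IsGInvariant c) (hca : IsAlternating c)
    {lam : Fin n → ℝ} (hlam : InParam lam) :
    c (stdTuple (n + 3) lam) =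
      (-1) ^ (n + 3 + 1) * c (stdTuple (n + 3) (shiftP (n + 3) lam)) := by
  have hstd := positivelyOriented_stdTuple_iff.mpr hlam
  have hrotate := hca (finRotate (n + 3))⁻¹ _ hstd.onCircleInj
  have hnormalize : c (stdTuple (n + 3) lam ∘ ⇑(finRotate (n + 3))⁻¹) =
      c (stdTuple (n + 3) (shiftP (n + 3) lam)) := by
    rw [hc.apply_eq_apply_stdTuple (positivelyOriented_comp_inv_finRotate_iff.mpr hstd),
      ← crossRatioParam_stdTuple_comp_inv_finRotate lam]
  rw [← hnormalize, Function.comp_def, hrotate, intCast_sign_inv_finRotate, ← mul_assoc, ← mul_pow]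
  simp

lemma IsGInvariant.eq_of_eq_stdTuple {c₁ c₂ : (Fin (n + 3) → ℂ) → ℝ} (hc₁ : IsGInvariant c₁)
    (hc₂ : IsGInvariant c₂) (hca₁ : IsAlternating c₁) (hca₂ : IsAlternating c₂)
    (h : ∀ lam : Fin n → ℝ, InParam lam → c₁ (stdTuple (n + 3) lam) = c₂ (stdTuple (n + 3) lam))
    {z : Fin (n + 3) → ℂ} (hz : OnCircleInj z) : c₁ z = c₂ z := by
  obtain ⟨σ, hσ⟩ := hz.exists_perm_positivelyOriented
  have hsorted : c₁ (z ∘ σ) = c₂ (z ∘ σ) := by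
    rw [hc₁.apply_eq_apply_stdTuple hσ, hc₂.apply_eq_apply_stdTuple hσ,
      h _ hσ.inParam_crossRatioParam]
  have hsign : (((Perm.sign σ : ℤˣ) : ℤ) : ℝ) ≠ 0 := Int.cast_ne_zero.mpr (Units.ne_zero _)
  refine mul_left_cancel₀ hsign ?_
  rw [← hca₁ σ z hz, ← hca₂ σ z hz]
  exact hsorted

end Restriction

section Extension

variable {n : ℕ} {f : (Fin n → ℝ) → ℝ}

lemma PositivelyOriented.sign_mul_apply_crossRatioParam_pow
    (hf : ∀ lam, InParam lam → f lam = (-1) ^ (n + 3 + 1) * f (shiftP (n + 3) lam))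
    {z : Fin (n + 3) → ℂ} (hz : PositivelyOriented z) (m : ℕ) :
    (Perm.sign ((finRotate (n + 3))⁻¹ ^ m) : ℤ) *
      f (crossRatioParam (z ∘ ⇑((finRotate (n + 3))⁻¹ ^ m))) = f (crossRatioParam z) := by
  induction m with
  | zero => simp
  | succ m ih =>
    have hm := hz.comp_inv_finRotate_pow m
    rw [← ih, hf _ hm.inParam_crossRatioParam, ← hm.crossRatioParam_comp_inv_finRotate,
      ← intCast_sign_inv_finRotate, pow_succ, Perm.sign_mul]
    push_cast
    rw [mul_assoc]
    rfl

lemma PositivelyOriented.sign_mul_apply_crossRatioParam_perm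
    (hf : ∀ lam, InParam lam → f lam = (-1) ^ (n + 3 + 1) * f (shiftP (n + 3) lam))
    {z : Fin (n + 3) → ℂ} (hz : PositivelyOriented z) {σ : Perm (Fin (n + 3))}
    (hσ : PositivelyOriented (z ∘ σ)) :
    (Perm.sign σ : ℤ) * f (crossRatioParam (z ∘ σ)) = f (crossRatioParam z) := by
  obtain ⟨m, rfl⟩ := hz.exists_perm_eq_inv_finRotate_pow hσ
  exact hz.sign_mul_apply_crossRatioParam_pow hf m

open Classical in
/-- The extension of `f` to an alternating function of tuples of distinct points of `S¹`: the signed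
value of `f` at the cross ratios of a positively oriented reordering of the tuple. Such a
reordering is unique only up to rotation, and averaging over all of them avoids a choice. -/
noncomputable def alternatingExtension (f : (Fin n → ℝ) → ℝ) (z : Fin (n + 3) → ℂ) : ℝ :=
  𝔼 σ ∈ {σ : Perm (Fin (n + 3)) | PositivelyOriented (z ∘ σ)},
    (Perm.sign σ : ℤ) * f (crossRatioParam (z ∘ σ))

lemma isAlternating_alternatingExtension (f : (Fin n → ℝ) → ℝ) :
    IsAlternating (alternatingExtension f) := by
  classical
  intro τ z _
  rw [alternatingExtension, alternatingExtension, Finset.mul_expect]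
  refine Finset.expect_equiv (Equiv.mulLeft τ) (fun σ => ?_) fun σ _ => ?_
  · simp [Function.comp_def]
  · simp [Function.comp_def, Perm.sign_mul, ← mul_assoc, ← Int.cast_mul]

lemma isGInvariant_alternatingExtension (f : (Fin n → ℝ) → ℝ) :
    IsGInvariant (alternatingExtension f) := by
  classical
  intro a b hab z hz
  have hnorm (σ : Perm (Fin (n + 3))) (j : Fin (n + 3)) : ‖(z ∘ σ) j‖ = 1 := hz.1 (σ j)
  refine Finset.expectWith_congr rfl
    (fun σ _ => positivelyOriented_mobius_iff hab (hnorm σ)) fun σ _ _ => ?_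
  exact congrArg (fun lam => _ * f lam) (crossRatioParam_mobius hab (hnorm σ))

lemma alternatingExtension_stdTuple
    (hf : ∀ lam, InParam lam → f lam = (-1) ^ (n + 3 + 1) * f (shiftP (n + 3) lam))
    {lam : Fin n → ℝ} (hlam : InParam lam) :
    alternatingExtension f (stdTuple (n + 3) lam) = f lam := by
  classical
  have hstd := positivelyOriented_stdTuple_iff.mpr hlam
  have hterm (σ : Perm (Fin (n + 3))) (hσ : PositivelyOriented (stdTuple (n + 3) lam ∘ σ)) :
      (Perm.sign σ : ℤ) * f (crossRatioParam (stdTuple (n + 3) lam ∘ σ)) = f lam := by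
    rw [hstd.sign_mul_apply_crossRatioParam_perm hf hσ, crossRatioParam_stdTuple]
  rw [alternatingExtension,
    Finset.expect_congr rfl fun σ hσ => hterm σ (Finset.mem_filter.mp hσ).2, Finset.expect_const]
  exact ⟨1, by simpa using hstd⟩

end Extension

/-- **The restriction map is a bijection.** For `k ≥ 4`, restriction
`res(c)(λ) = c(-i, 1, -1, 𝒞(λ₁), …, 𝒞(λ_{k-3}))` maps `G`-invariant alternating functions on
pairwise distinct tuples of points of `S¹` bijectively onto functions on `P_{k-3}` satisfying
`f(λ) = (-1)^{k+1}·f(shift λ)`; i.e. the restriction satisfies this symmetry, the restriction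
determines the function on pairwise distinct circle tuples, and every such `f` arises. -/
theorem restriction_bijection (k : ℕ) (hk : 4 ≤ k) :
    (∀ c : (Fin k → ℂ) → ℝ, IsAlternating c → IsGInvariant c →
      ∀ lam : Fin (k - 3) → ℝ, InParam lam →
        c (stdTuple k lam) = (-1 : ℝ) ^ (k + 1) * c (stdTuple k (shiftP k lam))) ∧
    (∀ c₁ c₂ : (Fin k → ℂ) → ℝ, IsAlternating c₁ → IsGInvariant c₁ →
      IsAlternating c₂ → IsGInvariant c₂ →
      (∀ lam : Fin (k - 3) → ℝ, InParam lam →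
        c₁ (stdTuple k lam) = c₂ (stdTuple k lam)) →
      ∀ z : Fin k → ℂ, OnCircleInj z → c₁ z = c₂ z) ∧
    (∀ f : (Fin (k - 3) → ℝ) → ℝ,
      (∀ lam : Fin (k - 3) → ℝ, InParam lam →
        f lam = (-1 : ℝ) ^ (k + 1) * f (shiftP k lam)) →
      ∃ c : (Fin k → ℂ) → ℝ, IsAlternating c ∧ IsGInvariant c ∧
        ∀ lam : Fin (k - 3) → ℝ, InParam lam → c (stdTuple k lam) = f lam) := by
  obtain ⟨n, rfl⟩ : ∃ n, k = n + 3 := ⟨k - 3, by omega⟩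
  exact ⟨fun c hca hc lam hlam => hc.apply_stdTuple_eq_shiftP hca hlam,
    fun c₁ c₂ hca₁ hc₁ hca₂ hc₂ h z hz => hc₁.eq_of_eq_stdTuple hc₂ hca₁ hca₂ h hz,
    fun f hf => ⟨alternatingExtension f, isAlternating_alternatingExtension f,
      isGInvariant_alternatingExtension f, fun lam hlam => alternatingExtension_stdTuple hf hlam⟩⟩
end

section
/- Let c₁, c₂ : (S¹)⁵ → ℝ be bounded measurable functions that are alternating (c(z_{σ(0)}, ..., z_{σ(4)}) = sgn(σ)·c(z₀, ..., z₄) for every permutation σ), invariant under the diagonal action of G = PU(1,1), and satisfy the cocycle equation Σ_{j=0}^{5} (−1)^j · c(z₀, ..., ẑ_j, ..., z₅) = 0 for all pairwise distinct z₀, ..., z₅ ∈ S¹. Then sup over (φ₁, φ₂) ∈ Ω of |F_{c₁}^♭(φ₁, φ₂) − F_{c₂}^♭(φ₁, φ₂)| is at most 4 times the supremum over (S¹)⁵ of |c₁ − c₂|. -/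
open MeasureTheory Real Complex

/-- The function `r_c(φ) = -(1/2)(1-e^{iφ})·∫_π^φ (1-cos ζ)⁻¹ ⨍⨍⨍ sin(η-ϕ)·
c(e^{iη}, e^{iϕ}, e^{iψ}, 1, e^{iζ}) dη dϕ dψ dζ`, where `⨍ = (1/2π)∫₀^{2π}`. -/
noncomputable def rc (c : (Fin 5 → ℂ) → ℝ) (φ : ℝ) : ℂ :=
  -(1 / 2 : ℂ) * (1 - Complex.exp (φ * Complex.I)) *
    ((∫ ζ in (π : ℝ)..φ, (1 - Real.cos ζ)⁻¹ *
        ((1 / (2 * π)) ^ 3 *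
          ∫ η in (0:ℝ)..(2 * π), ∫ ϕ in (0:ℝ)..(2 * π), ∫ ψ in (0:ℝ)..(2 * π),
            Real.sin (η - ϕ) *
              c ![Complex.exp (η * Complex.I), Complex.exp (ϕ * Complex.I),
                  Complex.exp (ψ * Complex.I), 1, Complex.exp (ζ * Complex.I)]) : ℝ) : ℂ)

/-- `θ₁ ⊖ θ₂`: the unique representative of `θ₁ - θ₂` modulo `2π` in `[0, 2π)`. -/
noncomputable def ominus (θ₁ θ₂ : ℝ) : ℝ := toIcoMod Real.two_pi_pos 0 (θ₁ - θ₂)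

/-- `v_c^♭(θ₁, θ₂) = Im(e^{iθ₁}·r_c(θ₂ ⊖ θ₁))`. -/
noncomputable def vflat (c : (Fin 5 → ℂ) → ℝ) (θ₁ θ₂ : ℝ) : ℝ :=
  (Complex.exp (θ₁ * Complex.I) * rc c (ominus θ₂ θ₁)).im

/-- `F_c^♭(φ₁, φ₂) = ⨍⨍ sin(ϕ)·c(e^{iη}, e^{iϕ}, 1, e^{iφ₁}, e^{iφ₂}) dη dϕ
+ v_c^♭(φ₁, φ₂) - v_c^♭(0, φ₂) + v_c^♭(0, φ₁)`. -/
noncomputable def Fflat (c : (Fin 5 → ℂ) → ℝ) (φ₁ φ₂ : ℝ) : ℝ :=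
  (1 / (2 * π)) ^ 2 *
      (∫ η in (0:ℝ)..(2 * π), ∫ ϕ in (0:ℝ)..(2 * π),
        Real.sin ϕ * c ![Complex.exp (η * Complex.I), Complex.exp (ϕ * Complex.I), 1,
          Complex.exp (φ₁ * Complex.I), Complex.exp (φ₂ * Complex.I)])
    + vflat c φ₁ φ₂ - vflat c 0 φ₂ + vflat c 0 φ₁

/-- `c` satisfies the homogeneous cocycle equation
`Σ_{j=0}^{5} (-1)^j·c(z₀, …, ẑ_j, …, z₅) = 0` on pairwise distinct tuples of points of `S¹`. -/
def IsCocycle (c : (Fin 5 → ℂ) → ℝ) : Prop :=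
  ∀ z : Fin 6 → ℂ, (∀ j, ‖z j‖ = 1) → Function.Injective z →
    ∑ j : Fin 6, (-1 : ℝ) ^ (j : ℕ) * c (fun i => z (j.succAbove i)) = 0

/-!
The map `c ↦ F_c^♭` is linear on bounded measurable functions, so it suffices to bound each of the
four terms of `F_c^♭` by `sup |c|`. For the average this is clear, since `|sin| ≤ 1`. For the terms
`v_c^♭` it says that `|r_c(φ)| ≤ sup |c|`: the inner average is at most `sup |c|`, and
`∫_π^φ (1 - cos ζ)⁻¹ dζ = -cot (φ/2)`, whose pole at `φ ∈ {0, 2π}` is cancelled by the prefactor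
`(1/2)|1 - e^{iφ}| = sin (φ/2)`, leaving `|cos (φ/2)| ≤ 1`.
-/

section Integration

variable {X Y Z : Type*} [MeasurableSpace X] [MeasurableSpace Y] [MeasurableSpace Z]

theorem abs_integral_le_of_abs_le {μ : Measure X} [IsProbabilityMeasure μ] {f : X → ℝ} {M : ℝ}
    (hf : ∀ x, |f x| ≤ M) : |∫ x, f x ∂μ| ≤ M := by
  have hnorm : ∀ᵐ x ∂μ, ‖f x‖ ≤ M := .of_forall hf
  simpa using norm_integral_le_of_norm_le_const hnorm

theorem integral_prod_prod {E : Type*} [NormedAddCommGroup E] [NormedSpace ℝ E]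
    {μ : Measure X} {ν : Measure Y} {ρ : Measure Z} [SFinite μ] [SFinite ν] [SFinite ρ]
    {f : X × Y × Z → E} (hf : Integrable f (μ.prod (ν.prod ρ))) :
    ∫ p, f p ∂μ.prod (ν.prod ρ) = ∫ x, ∫ y, ∫ z, f (x, y, z) ∂ρ ∂ν ∂μ := by
  rw [integral_prod f hf]
  exact integral_congr_ae (hf.prod_right_ae.mono fun x hx => integral_prod _ hx)

end Integration

section Trigonometry

variable {φ : ℝ}

theorem sin_half_pos_of_mem_Ioo (hφ : φ ∈ Set.Ioo 0 (2 * π)) : 0 < Real.sin (φ / 2) :=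
  Real.sin_pos_of_pos_of_lt_pi (by linarith [hφ.1]) (by linarith [hφ.2])

theorem abs_sin_mul_le (s : ℝ) {x M : ℝ} (hx : |x| ≤ M) : |Real.sin s * x| ≤ M := by
  rw [abs_mul]
  exact (mul_le_of_le_one_left (abs_nonneg x) (Real.abs_sin_le_one s)).trans hx

theorem one_sub_cos_eq_two_mul_sin_half_sq (ζ : ℝ) :
    1 - Real.cos ζ = 2 * Real.sin (ζ / 2) ^ 2 := by
  rw [Real.sin_sq_eq_half_sub, mul_div_cancel₀ ζ two_ne_zero]
  ring

theorem norm_one_sub_exp_mul_I (hφ : φ ∈ Set.Ioo 0 (2 * π)) :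
    ‖1 - Complex.exp (φ * Complex.I)‖ = 2 * Real.sin (φ / 2) := by
  have := sin_half_pos_of_mem_Ioo hφ
  rw [norm_sub_rev, mul_comm, Complex.norm_exp_I_mul_ofReal_sub_one,
    Real.norm_of_nonneg (by positivity)]

theorem hasDerivAt_neg_cot_half {ζ : ℝ} (hζ : Real.sin (ζ / 2) ≠ 0) :
    HasDerivAt (fun x => -Real.cot (x / 2)) (1 - Real.cos ζ)⁻¹ ζ := by
  simp only [Real.cot_eq_cos_div_sin]
  have half : HasDerivAt (fun x : ℝ => x / 2) (1 / 2) ζ := (hasDerivAt_id ζ).div_const 2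
  refine (half.cos.div half.sin hζ).neg.congr_deriv ?_
  rw [one_sub_cos_eq_two_mul_sin_half_sq]
  field_simp
  linarith [Real.sin_sq_add_cos_sq (ζ / 2)]

theorem sin_half_pos_of_mem_uIcc_pi (hφ : φ ∈ Set.Ioo 0 (2 * π)) {ζ : ℝ}
    (hζ : ζ ∈ Set.uIcc π φ) : 0 < Real.sin (ζ / 2) :=
  sin_half_pos_of_mem_Ioo <| Set.ordConnected_Ioo.uIcc_subset
    ⟨Real.pi_pos, by linarith [Real.pi_pos]⟩ hφ hζ

theorem intervalIntegrable_inv_one_sub_cos (hφ : φ ∈ Set.Ioo 0 (2 * π)) :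
    IntervalIntegrable (fun ζ => (1 - Real.cos ζ)⁻¹) volume π φ := by
  refine (ContinuousOn.inv₀ (by fun_prop) fun ζ hζ => ?_).intervalIntegrable
  have := sin_half_pos_of_mem_uIcc_pi hφ hζ
  rw [one_sub_cos_eq_two_mul_sin_half_sq]
  positivity

theorem integral_inv_one_sub_cos (hφ : φ ∈ Set.Ioo 0 (2 * π)) :
    ∫ ζ in π..φ, (1 - Real.cos ζ)⁻¹ = -Real.cot (φ / 2) := by
  rw [intervalIntegral.integral_eq_sub_of_hasDerivAt
    (fun ζ hζ => hasDerivAt_neg_cot_half (sin_half_pos_of_mem_uIcc_pi hφ hζ).ne')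
    (intervalIntegrable_inv_one_sub_cos hφ)]
  simp [Real.cot_eq_cos_div_sin]

end Trigonometry

section Ominus

theorem ominus_mem_Ioo {θ₁ θ₂ : ℝ} (h₁ : θ₁ ∈ Set.Ico 0 (2 * π)) (h₂ : θ₂ ∈ Set.Ico 0 (2 * π))
    (hne : θ₁ ≠ θ₂) : ominus θ₁ θ₂ ∈ Set.Ioo 0 (2 * π) := by
  have hmem : ominus θ₁ θ₂ ∈ Set.Ico 0 (2 * π) := by
    simpa [ominus] using toIcoMod_mem_Ico Real.two_pi_pos 0 (θ₁ - θ₂)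
  refine ⟨hmem.1.lt_of_ne fun hzero => hne ?_, hmem.2⟩
  have hmod : toIcoMod Real.two_pi_pos 0 θ₁ = toIcoMod Real.two_pi_pos 0 θ₂ := by
    rw [toIcoMod_inj, ← AddCommGroup.sub_modEq_zero, ← toIcoMod_inj Real.two_pi_pos (c := 0),
      toIcoMod_apply_left]
    exact hzero.symm
  rwa [(toIcoMod_eq_self _).2 (by simpa using h₁), (toIcoMod_eq_self _).2 (by simpa using h₂)]
    at hmod

theorem ominus_zero_mem_Ioo {φ : ℝ} (hφ : φ ∈ Set.Ioo 0 (2 * π)) :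
    ominus φ 0 ∈ Set.Ioo 0 (2 * π) :=
  ominus_mem_Ioo (Set.Ioo_subset_Ico_self hφ) ⟨le_rfl, Real.two_pi_pos⟩ hφ.1.ne'

end Ominus

section AngleMeasure

/-- The uniform probability measure on the interval `(0, 2π]` of angles, so that integration
against it is the average `⨍ = (1/2π)∫₀^{2π}`. -/
noncomputable def angleMeasure : Measure ℝ :=
  ProbabilityTheory.cond volume (Set.Ioc 0 (2 * π))

instance : IsProbabilityMeasure angleMeasure :=
  ProbabilityTheory.cond_isProbabilityMeasure_of_finite
    (by simp [Real.pi_pos]) (by simp [ENNReal.mul_eq_top])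

theorem integral_angleMeasure (f : ℝ → ℝ) :
    ∫ θ, f θ ∂angleMeasure = 1 / (2 * π) * ∫ θ in (0 : ℝ)..(2 * π), f θ := by
  rw [angleMeasure, ProbabilityTheory.cond, integral_smul_measure,
    intervalIntegral.integral_of_le Real.two_pi_pos.le]
  simp [Real.pi_pos.le]

end AngleMeasure

section Torus

/-- A real function on `ℂ^ι` whose restriction to the torus `(S¹)^ι` is bounded and Borel
measurable; nothing is required of its values off the torus. -/
structure IsBoundedMeasurableOnTorus {ι : Type*} (c : (ι → ℂ) → ℝ) : Prop where
  measurable : Measurable fun z : ι → {w : ℂ // ‖w‖ = 1} => c fun j => (z j : ℂ)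
  bounded : ∃ M : ℝ, ∀ z : ι → ℂ, (∀ j, ‖z j‖ = 1) → |c z| ≤ M

variable {ι X : Type*} [MeasurableSpace X] {c : (ι → ℂ) → ℝ}

theorem IsBoundedMeasurableOnTorus.measurable_comp (hc : IsBoundedMeasurableOnTorus c)
    {z : X → ι → ℂ} (hz : Measurable z) (hz_norm : ∀ x j, ‖z x j‖ = 1) :
    Measurable fun x => c (z x) :=
  hc.measurable.comp <| measurable_pi_lambda _ fun j =>
    (measurable_pi_iff.1 hz j).subtype_mk (h := fun x => hz_norm x j)

theorem IsBoundedMeasurableOnTorus.integrable_sin_mul_comp (hc : IsBoundedMeasurableOnTorus c)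
    {μ : Measure X} [IsFiniteMeasure μ] {s : X → ℝ} (hs : Measurable s) {z : X → ι → ℂ}
    (hz : Measurable z) (hz_norm : ∀ x j, ‖z x j‖ = 1) :
    Integrable (fun x => Real.sin (s x) * c (z x)) μ := by
  obtain ⟨M, hM⟩ := hc.bounded
  have hmeas := hc.measurable_comp hz hz_norm
  exact .of_bound (hs.sin.mul hmeas).aestronglyMeasurable M <|
    .of_forall fun x => abs_sin_mul_le _ (hM _ (hz_norm x))

theorem IsBoundedMeasurableOnTorus.sub {c₁ c₂ : (ι → ℂ) → ℝ}
    (hc₁ : IsBoundedMeasurableOnTorus c₁) (hc₂ : IsBoundedMeasurableOnTorus c₂) :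
    IsBoundedMeasurableOnTorus (c₁ - c₂) := by
  obtain ⟨M₁, hM₁⟩ := hc₁.bounded
  obtain ⟨M₂, hM₂⟩ := hc₂.bounded
  exact ⟨hc₁.measurable.sub hc₂.measurable, M₁ + M₂, fun z hz =>
    (abs_sub _ _).trans (add_le_add (hM₁ z hz) (hM₂ z hz))⟩

end Torus

section RcAverage

/-- The point `(e^{iη}, e^{iϕ}, e^{iψ}, 1, e^{iζ})` of `(S¹)⁵`, where `p = (η, ϕ, ψ)`. -/
noncomputable def rcTuple (ζ : ℝ) (p : ℝ × ℝ × ℝ) : Fin 5 → ℂ :=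
  ![Complex.exp (p.1 * Complex.I), Complex.exp (p.2.1 * Complex.I),
    Complex.exp (p.2.2 * Complex.I), 1, Complex.exp (ζ * Complex.I)]

theorem norm_rcTuple_apply (ζ : ℝ) (p : ℝ × ℝ × ℝ) (j : Fin 5) : ‖rcTuple ζ p j‖ = 1 := by
  fin_cases j <;> simp [rcTuple, Complex.norm_exp_ofReal_mul_I]

theorem measurable_uncurry_rcTuple : Measurable (Function.uncurry rcTuple) := by
  refine measurable_pi_lambda _ fun j => ?_
  fin_cases j <;> simp only [Function.uncurry_def, rcTuple] <;> fun_prop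

/-- The average `⨍⨍⨍ sin(η-ϕ)·c(e^{iη}, e^{iϕ}, e^{iψ}, 1, e^{iζ}) dη dϕ dψ` in the definition
of `r_c`. -/
noncomputable def rcAverage (c : (Fin 5 → ℂ) → ℝ) (ζ : ℝ) : ℝ :=
  ∫ η, ∫ ϕ, ∫ ψ, Real.sin (η - ϕ) * c (rcTuple ζ (η, ϕ, ψ))
    ∂angleMeasure ∂angleMeasure ∂angleMeasure

theorem rc_eq_integral_rcAverage (c : (Fin 5 → ℂ) → ℝ) (φ : ℝ) :
    rc c φ = -(1 / 2 : ℂ) * (1 - Complex.exp (φ * Complex.I)) *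
      ((∫ ζ in π..φ, (1 - Real.cos ζ)⁻¹ * rcAverage c ζ : ℝ) : ℂ) := by
  simp only [rc, rcAverage, rcTuple, integral_angleMeasure, intervalIntegral.integral_const_mul,
    pow_succ, pow_zero, one_mul, mul_assoc]

theorem abs_rcAverage_le {c : (Fin 5 → ℂ) → ℝ} {M : ℝ}
    (hM : ∀ z : Fin 5 → ℂ, (∀ j, ‖z j‖ = 1) → |c z| ≤ M) (ζ : ℝ) : |rcAverage c ζ| ≤ M :=
  abs_integral_le_of_abs_le fun _ => abs_integral_le_of_abs_le fun _ =>
    abs_integral_le_of_abs_le fun _ => abs_sin_mul_le _ (hM _ (norm_rcTuple_apply ζ _))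

variable {c c₁ c₂ : (Fin 5 → ℂ) → ℝ}

theorem integrable_sin_mul_rcTuple (hc : IsBoundedMeasurableOnTorus c) (ζ : ℝ) :
    Integrable (fun p : ℝ × ℝ × ℝ => Real.sin (p.1 - p.2.1) * c (rcTuple ζ p))
      (angleMeasure.prod (angleMeasure.prod angleMeasure)) :=
  hc.integrable_sin_mul_comp (by fun_prop)
    (measurable_uncurry_rcTuple.comp measurable_prodMk_left) (norm_rcTuple_apply ζ)

theorem rcAverage_eq_integral_prod (hc : IsBoundedMeasurableOnTorus c) (ζ : ℝ) :
    rcAverage c ζ = ∫ p : ℝ × ℝ × ℝ, Real.sin (p.1 - p.2.1) * c (rcTuple ζ p)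
      ∂angleMeasure.prod (angleMeasure.prod angleMeasure) :=
  (integral_prod_prod (integrable_sin_mul_rcTuple hc ζ)).symm

theorem rcAverage_sub (hc₁ : IsBoundedMeasurableOnTorus c₁) (hc₂ : IsBoundedMeasurableOnTorus c₂)
    (ζ : ℝ) : rcAverage (c₁ - c₂) ζ = rcAverage c₁ ζ - rcAverage c₂ ζ := by
  rw [rcAverage_eq_integral_prod (hc₁.sub hc₂), rcAverage_eq_integral_prod hc₁,
    rcAverage_eq_integral_prod hc₂,
    ← integral_sub (integrable_sin_mul_rcTuple hc₁ ζ) (integrable_sin_mul_rcTuple hc₂ ζ)]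
  simp only [Pi.sub_apply, mul_sub]

theorem measurable_rcAverage (hc : IsBoundedMeasurableOnTorus c) : Measurable (rcAverage c) := by
  have hjoint : Measurable fun q : ℝ × ℝ × ℝ × ℝ => c (rcTuple q.1 q.2) :=
    hc.measurable_comp measurable_uncurry_rcTuple fun q => norm_rcTuple_apply q.1 q.2
  have hintegrand : Measurable fun q : ℝ × ℝ × ℝ × ℝ =>
      Real.sin (q.2.1 - q.2.2.1) * c (rcTuple q.1 q.2) :=
    Measurable.mul (by fun_prop) hjoint
  rw [funext (rcAverage_eq_integral_prod hc)]
  exact hintegrand.stronglyMeasurable.integral_prod_right'.measurable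

theorem intervalIntegrable_inv_one_sub_cos_mul_rcAverage (hc : IsBoundedMeasurableOnTorus c)
    {φ : ℝ} (hφ : φ ∈ Set.Ioo 0 (2 * π)) :
    IntervalIntegrable (fun ζ => (1 - Real.cos ζ)⁻¹ * rcAverage c ζ) volume π φ := by
  obtain ⟨M, hM⟩ := hc.bounded
  rw [intervalIntegrable_iff]
  exact (intervalIntegrable_iff.1 (intervalIntegrable_inv_one_sub_cos hφ)).mul_bdd
    (measurable_rcAverage hc).aestronglyMeasurable (.of_forall (abs_rcAverage_le hM))

end RcAverage

section Rc

variable {c c₁ c₂ : (Fin 5 → ℂ) → ℝ} {φ M : ℝ}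

theorem rc_sub (hc₁ : IsBoundedMeasurableOnTorus c₁) (hc₂ : IsBoundedMeasurableOnTorus c₂)
    (hφ : φ ∈ Set.Ioo 0 (2 * π)) : rc (c₁ - c₂) φ = rc c₁ φ - rc c₂ φ := by
  simp only [rc_eq_integral_rcAverage, rcAverage_sub hc₁ hc₂, mul_sub]
  rw [intervalIntegral.integral_sub (intervalIntegrable_inv_one_sub_cos_mul_rcAverage hc₁ hφ)
    (intervalIntegrable_inv_one_sub_cos_mul_rcAverage hc₂ hφ), Complex.ofReal_sub, mul_sub]

theorem abs_integral_inv_one_sub_cos_mul_le {f : ℝ → ℝ} (hf : ∀ ζ, |f ζ| ≤ M)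
    (hφ : φ ∈ Set.Ioo 0 (2 * π)) :
    |∫ ζ in π..φ, (1 - Real.cos ζ)⁻¹ * f ζ| ≤ |Real.cot (φ / 2)| * M := by
  have hM : 0 ≤ M := (abs_nonneg _).trans (hf 0)
  have hpointwise (ζ : ℝ) : ‖(1 - Real.cos ζ)⁻¹ * f ζ‖ ≤ (1 - Real.cos ζ)⁻¹ * M := by
    have hweight : 0 ≤ (1 - Real.cos ζ)⁻¹ := inv_nonneg.2 (sub_nonneg.2 (Real.cos_le_one ζ))
    rw [norm_mul, Real.norm_of_nonneg hweight]
    exact mul_le_mul_of_nonneg_left (hf ζ) hweight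
  calc |∫ ζ in π..φ, (1 - Real.cos ζ)⁻¹ * f ζ|
      ≤ |∫ ζ in π..φ, (1 - Real.cos ζ)⁻¹ * M| :=
        intervalIntegral.norm_integral_le_abs_of_norm_le (.of_forall hpointwise)
          ((intervalIntegrable_inv_one_sub_cos hφ).mul_const M)
    _ = |Real.cot (φ / 2)| * M := by
        rw [intervalIntegral.integral_mul_const, integral_inv_one_sub_cos hφ, abs_mul, abs_neg,
          abs_of_nonneg hM]

theorem norm_rc_le (hM : ∀ z : Fin 5 → ℂ, (∀ j, ‖z j‖ = 1) → |c z| ≤ M)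
    (hφ : φ ∈ Set.Ioo 0 (2 * π)) : ‖rc c φ‖ ≤ M := by
  have hsin := sin_half_pos_of_mem_Ioo hφ
  have hM_nonneg : 0 ≤ M := (abs_nonneg _).trans (abs_rcAverage_le hM 0)
  calc ‖rc c φ‖
      = Real.sin (φ / 2) * |∫ ζ in π..φ, (1 - Real.cos ζ)⁻¹ * rcAverage c ζ| := by
        rw [rc_eq_integral_rcAverage, norm_mul, norm_mul, norm_one_sub_exp_mul_I hφ,
          Complex.norm_real, Real.norm_eq_abs]
        simp
    _ ≤ Real.sin (φ / 2) * (|Real.cot (φ / 2)| * M) := by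
        gcongr
        exact abs_integral_inv_one_sub_cos_mul_le (abs_rcAverage_le hM) hφ
    _ = |Real.cos (φ / 2)| * M := by
        rw [Real.cot_eq_cos_div_sin, abs_div, abs_of_pos hsin]
        field_simp
    _ ≤ M := mul_le_of_le_one_left hM_nonneg (Real.abs_cos_le_one _)

end Rc

section Vflat

variable {c c₁ c₂ : (Fin 5 → ℂ) → ℝ} {θ₁ θ₂ : ℝ}

theorem vflat_sub (hc₁ : IsBoundedMeasurableOnTorus c₁) (hc₂ : IsBoundedMeasurableOnTorus c₂)
    (hθ : ominus θ₂ θ₁ ∈ Set.Ioo 0 (2 * π)) :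
    vflat (c₁ - c₂) θ₁ θ₂ = vflat c₁ θ₁ θ₂ - vflat c₂ θ₁ θ₂ := by
  rw [vflat, rc_sub hc₁ hc₂ hθ, mul_sub, Complex.sub_im, vflat, vflat]

theorem abs_vflat_le {M : ℝ} (hM : ∀ z : Fin 5 → ℂ, (∀ j, ‖z j‖ = 1) → |c z| ≤ M)
    (hθ : ominus θ₂ θ₁ ∈ Set.Ioo 0 (2 * π)) : |vflat c θ₁ θ₂| ≤ M :=
  calc |vflat c θ₁ θ₂| ≤ ‖Complex.exp (θ₁ * Complex.I) * rc c (ominus θ₂ θ₁)‖ :=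
        Complex.abs_im_le_norm _
    _ = ‖rc c (ominus θ₂ θ₁)‖ := by rw [norm_mul, Complex.norm_exp_ofReal_mul_I, one_mul]
    _ ≤ M := norm_rc_le hM hθ

end Vflat

section FflatAverage

/-- The point `(e^{iη}, e^{iϕ}, 1, e^{iφ₁}, e^{iφ₂})` of `(S¹)⁵`, where `p = (η, ϕ)`. -/
noncomputable def FflatTuple (φ₁ φ₂ : ℝ) (p : ℝ × ℝ) : Fin 5 → ℂ :=
  ![Complex.exp (p.1 * Complex.I), Complex.exp (p.2 * Complex.I), 1,
    Complex.exp (φ₁ * Complex.I), Complex.exp (φ₂ * Complex.I)]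

variable (φ₁ φ₂ : ℝ)

theorem norm_FflatTuple_apply (p : ℝ × ℝ) (j : Fin 5) : ‖FflatTuple φ₁ φ₂ p j‖ = 1 := by
  fin_cases j <;> simp [FflatTuple, Complex.norm_exp_ofReal_mul_I]

theorem measurable_FflatTuple : Measurable (FflatTuple φ₁ φ₂) := by
  refine measurable_pi_lambda _ fun j => ?_
  fin_cases j <;> simp only [FflatTuple] <;> fun_prop

/-- The average `⨍⨍ sin(ϕ)·c(e^{iη}, e^{iϕ}, 1, e^{iφ₁}, e^{iφ₂}) dη dϕ` in the definition
of `F_c^♭`. -/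
noncomputable def FflatAverage (c : (Fin 5 → ℂ) → ℝ) (φ₁ φ₂ : ℝ) : ℝ :=
  ∫ η, ∫ ϕ, Real.sin ϕ * c (FflatTuple φ₁ φ₂ (η, ϕ)) ∂angleMeasure ∂angleMeasure

theorem Fflat_eq_FflatAverage_add (c : (Fin 5 → ℂ) → ℝ) :
    Fflat c φ₁ φ₂ = FflatAverage c φ₁ φ₂ + vflat c φ₁ φ₂ - vflat c 0 φ₂ + vflat c 0 φ₁ := by
  simp only [Fflat, FflatAverage, FflatTuple, integral_angleMeasure,
    intervalIntegral.integral_const_mul, sq, mul_assoc]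

theorem abs_FflatAverage_le {c : (Fin 5 → ℂ) → ℝ} {M : ℝ}
    (hM : ∀ z : Fin 5 → ℂ, (∀ j, ‖z j‖ = 1) → |c z| ≤ M) : |FflatAverage c φ₁ φ₂| ≤ M :=
  abs_integral_le_of_abs_le fun _ => abs_integral_le_of_abs_le fun _ =>
    abs_sin_mul_le _ (hM _ (norm_FflatTuple_apply φ₁ φ₂ _))

variable {c c₁ c₂ : (Fin 5 → ℂ) → ℝ}

theorem integrable_sin_mul_FflatTuple (hc : IsBoundedMeasurableOnTorus c) :
    Integrable (fun p : ℝ × ℝ => Real.sin p.2 * c (FflatTuple φ₁ φ₂ p))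
      (angleMeasure.prod angleMeasure) :=
  hc.integrable_sin_mul_comp measurable_snd (measurable_FflatTuple φ₁ φ₂)
    (norm_FflatTuple_apply φ₁ φ₂)

theorem FflatAverage_sub (hc₁ : IsBoundedMeasurableOnTorus c₁)
    (hc₂ : IsBoundedMeasurableOnTorus c₂) :
    FflatAverage (c₁ - c₂) φ₁ φ₂ = FflatAverage c₁ φ₁ φ₂ - FflatAverage c₂ φ₁ φ₂ := by
  simp only [FflatAverage, Pi.sub_apply, mul_sub]
  exact integral_integral_sub (integrable_sin_mul_FflatTuple φ₁ φ₂ hc₁)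
    (integrable_sin_mul_FflatTuple φ₁ φ₂ hc₂)

end FflatAverage

section Fflat

variable {c c₁ c₂ : (Fin 5 → ℂ) → ℝ} {φ₁ φ₂ M : ℝ}

theorem Fflat_sub (hc₁ : IsBoundedMeasurableOnTorus c₁) (hc₂ : IsBoundedMeasurableOnTorus c₂)
    (hφ₁ : φ₁ ∈ Set.Ioo 0 (2 * π)) (hφ₂ : φ₂ ∈ Set.Ioo 0 (2 * π)) (hne : φ₁ ≠ φ₂) :
    Fflat (c₁ - c₂) φ₁ φ₂ = Fflat c₁ φ₁ φ₂ - Fflat c₂ φ₁ φ₂ := by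
  have hominus :=
    ominus_mem_Ioo (Set.Ioo_subset_Ico_self hφ₂) (Set.Ioo_subset_Ico_self hφ₁) hne.symm
  simp only [Fflat_eq_FflatAverage_add, FflatAverage_sub φ₁ φ₂ hc₁ hc₂,
    vflat_sub hc₁ hc₂ hominus, vflat_sub hc₁ hc₂ (ominus_zero_mem_Ioo hφ₁),
    vflat_sub hc₁ hc₂ (ominus_zero_mem_Ioo hφ₂)]
  ring

theorem abs_Fflat_le (hM : ∀ z : Fin 5 → ℂ, (∀ j, ‖z j‖ = 1) → |c z| ≤ M)
    (hφ₁ : φ₁ ∈ Set.Ioo 0 (2 * π)) (hφ₂ : φ₂ ∈ Set.Ioo 0 (2 * π)) (hne : φ₁ ≠ φ₂) :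
    |Fflat c φ₁ φ₂| ≤ 4 * M := by
  have hominus :=
    ominus_mem_Ioo (Set.Ioo_subset_Ico_self hφ₂) (Set.Ioo_subset_Ico_self hφ₁) hne.symm
  have haverage := abs_le.1 (abs_FflatAverage_le φ₁ φ₂ hM)
  have hv₁₂ := abs_le.1 (abs_vflat_le hM hominus)
  have hv₀₁ := abs_le.1 (abs_vflat_le hM (ominus_zero_mem_Ioo hφ₁))
  have hv₀₂ := abs_le.1 (abs_vflat_le hM (ominus_zero_mem_Ioo hφ₂))
  rw [Fflat_eq_FflatAverage_add, abs_le]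
  constructor <;> linarith

theorem Fflat_lipschitz_general (hc₁ : IsBoundedMeasurableOnTorus c₁)
    (hc₂ : IsBoundedMeasurableOnTorus c₂)
    (hM : ∀ z : Fin 5 → ℂ, (∀ j, ‖z j‖ = 1) → |c₁ z - c₂ z| ≤ M)
    (hφ₁ : φ₁ ∈ Set.Ioo 0 (2 * π)) (hφ₂ : φ₂ ∈ Set.Ioo 0 (2 * π)) (hne : φ₁ ≠ φ₂) :
    |Fflat c₁ φ₁ φ₂ - Fflat c₂ φ₁ φ₂| ≤ 4 * M := by
  rw [← Fflat_sub hc₁ hc₂ hφ₁ hφ₂ hne]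
  exact abs_Fflat_le hM hφ₁ hφ₂ hne

end Fflat

/-- **Lipschitz estimate for `F_c^♭`.** For bounded measurable alternating `G`-invariant
cocycles `c₁, c₂` on `(S¹)⁵`, one has `|F_{c₁}^♭ - F_{c₂}^♭| ≤ 4·sup|c₁ - c₂|` on
`Ω = {(φ₁,φ₂) ∈ (0,2π)² : φ₁ ≠ φ₂}` (stated via any uniform bound `M` for `|c₁ - c₂|`
over `(S¹)⁵`). -/
theorem Fflat_lipschitz (c₁ c₂ : (Fin 5 → ℂ) → ℝ)
    (hm₁ : Measurable fun z : Fin 5 → {w : ℂ // ‖w‖ = 1} => c₁ fun j => (z j : ℂ))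
    (hm₂ : Measurable fun z : Fin 5 → {w : ℂ // ‖w‖ = 1} => c₂ fun j => (z j : ℂ))
    (hb₁ : ∃ M : ℝ, ∀ z : Fin 5 → ℂ, (∀ j, ‖z j‖ = 1) → |c₁ z| ≤ M)
    (hb₂ : ∃ M : ℝ, ∀ z : Fin 5 → ℂ, (∀ j, ‖z j‖ = 1) → |c₂ z| ≤ M)
    (halt₁ : IsAlternating c₁) (halt₂ : IsAlternating c₂)
    (hinv₁ : IsGInvariant c₁) (hinv₂ : IsGInvariant c₂)
    (hcoc₁ : IsCocycle c₁) (hcoc₂ : IsCocycle c₂)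
    (M : ℝ) (hM : ∀ z : Fin 5 → ℂ, (∀ j, ‖z j‖ = 1) → |c₁ z - c₂ z| ≤ M) :
    ∀ φ₁ φ₂ : ℝ, φ₁ ∈ Set.Ioo (0:ℝ) (2 * π) → φ₂ ∈ Set.Ioo (0:ℝ) (2 * π) → φ₁ ≠ φ₂ →
      |Fflat c₁ φ₁ φ₂ - Fflat c₂ φ₁ φ₂| ≤ 4 * M :=
  fun _ _ => Fflat_lipschitz_general ⟨hm₁, hb₁⟩ ⟨hm₂, hb₂⟩ hM
end

section
/- Let 0 ≤ θ₀ < θ₁ < θ₂ < θ₃ < 2π. Then (1/2π)·∫₀^{2π} c(e^{iψ}, e^{iθ₀}, e^{iθ₁}, e^{iθ₂}, e^{iθ₃}) dψ = −(ζ(2)/(2π))·(θ₀ − θ₁ + θ₂ − θ₃ + π). -/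
open Real Complex

/-- `c` is the cocycle `c(z̲) = -(ζ(2)/2)·(-1)^{z̲}` (with `ζ(2) = π²/6`), i.e. whenever a
permutation `σ` brings the tuple `z̲` into cyclically oriented position, `c(z̲)` equals
`-(ζ(2)/2)·sgn(σ)`. -/
def OrientationProp (c : (Fin 5 → ℂ) → ℝ) : Prop :=
  ∀ (z : Fin 5 → ℂ) (σ : Equiv.Perm (Fin 5)),
    CyclicallyOriented (fun i => z (σ i)) →
    c z = -(π ^ 2 / 6 / 2) * ((Equiv.Perm.sign σ : ℤ) : ℝ)

/-! Turn `ψ` once around the circle, starting at `θ₀`. While `ψ` lies in the `j`-th (from `j = 0`)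
of the arcs cut out by the points `θ₀ < ⋯ < θₙ < θ₀ + 2π`, moving it behind the first `j + 1` of
them sorts the tuple, so the cocycle is constant there, equal to `(-1) ^ (j + 1)` times its value on
sorted tuples. The integral over a turn is therefore an alternating sum of arc lengths, in which
every `θⱼ` occurs twice with the same sign when the number of points is even. -/

open MeasureTheory Set

section InsertNth

variable {α : Type*} [Preorder α] {n : ℕ} {θ : Fin n → α} {x : α}

theorem strictMono_insertNth (hθ : StrictMono θ) (p : Fin (n + 1))
    (below : ∀ j : Fin n, j.castSucc < p → θ j < x)
    (above : ∀ j : Fin n, p ≤ j.castSucc → x < θ j) :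
    StrictMono (p.insertNth x θ : Fin (n + 1) → α) := by
  simp only [StrictMono, p.forall_iff_succAbove, Fin.insertNth_apply_same,
    Fin.insertNth_apply_succAbove, lt_irrefl, false_imp_iff, true_and]
  refine ⟨fun j hj ↦ above j (Fin.lt_succAbove_iff_le_castSucc p j |>.1 hj), fun i ↦
    ⟨fun hi ↦ below i (Fin.succAbove_lt_iff_castSucc_lt p i |>.1 hi), fun j hij ↦
      hθ (Fin.succAbove_lt_succAbove_iff.1 hij)⟩⟩

theorem strictMono_snoc (hθ : StrictMono θ) (hx : ∀ j, θ j < x) :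
    StrictMono (Fin.snoc θ x : Fin (n + 1) → α) := by
  rw [← Fin.insertNth_last']
  exact strictMono_insertNth hθ _ (fun j _ ↦ hx j) fun j hj ↦
    absurd hj (Fin.castSucc_lt_last j).not_ge

end InsertNth

section StepFunction

variable {E : Type*} [NormedAddCommGroup E] {f : ℝ → E}

theorem intervalIntegrable_of_eqOn_const {a b : ℝ} {K : E} (hab : a ≤ b)
    (hf : EqOn f (fun _ ↦ K) (Ioo a b)) : IntervalIntegrable f volume a b :=
  (intervalIntegrable_congr_uIoo (by rwa [uIoo_of_le hab])).2 intervalIntegrable_const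

theorem intervalIntegrable_and_integral_eq_sum_of_eqOn_const [NormedSpace ℝ E] [CompleteSpace E]
    {n : ℕ} {t : Fin (n + 1) → ℝ} {K : Fin n → E} (ht : Monotone t)
    (hf : ∀ j, EqOn f (fun _ ↦ K j) (Ioo (t j.castSucc) (t j.succ))) :
    IntervalIntegrable f volume (t 0) (t (Fin.last n)) ∧
      ∫ x in t 0..t (Fin.last n), f x = ∑ j, (t j.succ - t j.castSucc) • K j := by
  induction n with
  | zero => simp
  | succ n ih =>
    obtain ⟨integrable_init, integral_init⟩ :=
      ih (t := t ∘ Fin.castSucc) (K := K ∘ Fin.castSucc)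
        (ht.comp Fin.strictMono_castSucc.monotone) fun j ↦ hf j.castSucc
    have last_le : t (Fin.last n).castSucc ≤ t (Fin.last n).succ := ht Fin.castSucc_lt_succ.le
    have integrable_last := intervalIntegrable_of_eqOn_const last_le (hf (Fin.last n))
    have integral_last := intervalIntegral.integral_congr_Ioo_of_le (μ := volume) last_le
      (hf (Fin.last n))
    refine ⟨integrable_init.trans integrable_last, ?_⟩
    rw [Fin.sum_univ_castSucc, ← intervalIntegral.integral_const, ← integral_last]
    exact (intervalIntegral.integral_add_adjacent_intervals integrable_init
      integrable_last).symm.trans (congrArg (· + _) integral_init)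

end StepFunction

theorem sum_neg_one_pow_mul_sub_succ {R : Type*} [CommRing R] {n : ℕ} (t : Fin (n + 1) → R) :
    ∑ j : Fin n, (-1) ^ (j + 1 : ℕ) * (t j.succ - t j.castSucc) =
      2 * ∑ j : Fin n, (-1) ^ (j : ℕ) * t j.castSucc + (-1) ^ n * t (Fin.last n) - t 0 := by
  have sum_split : t 0 + ∑ j : Fin n, (-1) ^ (j + 1 : ℕ) * t j.succ =
      ∑ j : Fin n, (-1) ^ (j : ℕ) * t j.castSucc + (-1) ^ n * t (Fin.last n) := by
    simpa using (Fin.sum_univ_succ fun j : Fin (n + 1) ↦ (-1) ^ (j : ℕ) * t j).symm.trans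
      (Fin.sum_univ_castSucc _)
  have castSucc_sum : ∑ j : Fin n, (-1) ^ (j + 1 : ℕ) * t j.castSucc =
      -∑ j : Fin n, (-1) ^ (j : ℕ) * t j.castSucc := by
    simp only [pow_succ, mul_neg_one, neg_mul, Finset.sum_neg_distrib]
  simp only [mul_sub, Finset.sum_sub_distrib, castSucc_sum]
  linear_combination sum_split

theorem cyclicallyOriented_exp_of_mem_Ico {k : ℕ} {θ : Fin k → ℝ} {a : ℝ} (hθ : StrictMono θ)
    (hmem : ∀ j, θ j ∈ Ico a (a + 2 * π)) :
    CyclicallyOriented fun j ↦ Complex.exp (θ j * Complex.I) :=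
  ⟨θ, hθ, fun i j ↦ by linarith [(hmem i).1, (hmem j).2], fun _ ↦ rfl⟩

/-- `c` is `K` times the orientation sign of tuples of `k` points of the circle: it takes the value
`K · sgn σ` at every tuple that `σ` brings into cyclically oriented position. `OrientationProp` is
the case `k = 5`, `K = -ζ(2)/2`. For even `k > 0` cyclic rotations are odd, which forces `K = 0`. -/
def IsOrientationMultiple {k : ℕ} (K : ℝ) (c : (Fin k → ℂ) → ℝ) : Prop :=
  ∀ (z : Fin k → ℂ) (σ : Equiv.Perm (Fin k)), CyclicallyOriented (fun i ↦ z (σ i)) →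
    c z = K * ((Equiv.Perm.sign σ : ℤ) : ℝ)

theorem IsOrientationMultiple.apply_cons {k : ℕ} {K : ℝ} {c : (Fin (k + 1) → ℂ) → ℝ}
    (hc : IsOrientationMultiple K c) {w : ℂ} {z : Fin k → ℂ} (p : Fin (k + 1))
    (hz : CyclicallyOriented (p.insertNth w z : Fin (k + 1) → ℂ)) :
    c (Fin.cons w z) = K * (-1) ^ (p : ℕ) := by
  rw [← Fin.cons_comp_cycleRange] at hz
  simpa using hc _ p.cycleRange hz

/-- The end points of the arcs into which the points with arguments `θ₀ < ⋯ < θₙ < θ₀ + 2π` divide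
the circle, listed over one full turn: `θ₀, …, θₙ, θ₀ + 2π`. -/
noncomputable def arcEndpoints {n : ℕ} (θ : Fin (n + 1) → ℝ) : Fin (n + 2) → ℝ :=
  Fin.snoc θ (θ 0 + 2 * π)

section Arcs

variable {n : ℕ} {θ : Fin (n + 1) → ℝ} {ψ : ℝ}

@[simp]
theorem arcEndpoints_castSucc (j : Fin (n + 1)) : arcEndpoints θ j.castSucc = θ j :=
  Fin.snoc_castSucc (α := fun _ ↦ ℝ) ..

@[simp]
theorem arcEndpoints_zero : arcEndpoints θ 0 = θ 0 :=
  arcEndpoints_castSucc 0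

@[simp]
theorem arcEndpoints_last : arcEndpoints θ (Fin.last (n + 1)) = θ 0 + 2 * π :=
  Fin.snoc_last (α := fun _ ↦ ℝ) ..

theorem strictMono_arcEndpoints (hθ : StrictMono θ) (hturn : θ (Fin.last n) < θ 0 + 2 * π) :
    StrictMono (arcEndpoints θ) :=
  strictMono_snoc hθ fun j ↦ (hθ.monotone j.le_last).trans_lt hturn

theorem cyclicallyOriented_insertNth_of_mem_arc (hθ : StrictMono θ)
    (hturn : θ (Fin.last n) < θ 0 + 2 * π) (j : Fin (n + 1))
    (hψ : ψ ∈ Ioo (arcEndpoints θ j.castSucc) (arcEndpoints θ j.succ)) :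
    CyclicallyOriented (j.succ.insertNth (Complex.exp (ψ * Complex.I))
      (fun i ↦ Complex.exp (θ i * Complex.I)) : Fin (n + 2) → ℂ) := by
  have ht := (strictMono_arcEndpoints hθ hturn).monotone
  have lower : θ j < ψ := by simpa only [arcEndpoints_castSucc] using hψ.1
  have upper : ψ < θ 0 + 2 * π :=
    hψ.2.trans_le <| (ht (Fin.le_last _)).trans_eq arcEndpoints_last
  have hsorted : StrictMono (j.succ.insertNth ψ θ : Fin (n + 2) → ℝ) := by
    refine strictMono_insertNth hθ _ (fun i hi ↦ ?_) fun i hi ↦ ?_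
    · exact (hθ.monotone (Fin.castSucc_lt_succ_iff.1 hi)).trans_lt lower
    · exact hψ.2.trans_le <| (ht hi).trans_eq (arcEndpoints_castSucc i)
  have hmem : ∀ i, (j.succ.insertNth ψ θ : Fin (n + 2) → ℝ) i ∈ Ico (θ 0) (θ 0 + 2 * π) := by
    simp only [j.succ.forall_iff_succAbove, Fin.insertNth_apply_same,
      Fin.insertNth_apply_succAbove]
    exact ⟨⟨(hθ.monotone j.zero_le).trans lower.le, upper⟩, fun i ↦
      ⟨hθ.monotone i.zero_le, (hθ.monotone i.le_last).trans_lt hturn⟩⟩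
  convert cyclicallyOriented_exp_of_mem_Ico hsorted hmem using 1
  ext i
  cases i using j.succ.succAboveCases <;> simp

end Arcs

theorem periodic_exp_ofReal_mul_I :
    Function.Periodic (fun ψ : ℝ ↦ Complex.exp (ψ * Complex.I)) (2 * π) := fun ψ ↦ by
  simpa [add_mul] using Complex.exp_periodic (ψ * Complex.I)

section Integral

variable {n : ℕ} {K : ℝ} {c : (Fin (n + 2) → ℂ) → ℝ} {θ : Fin (n + 1) → ℝ}

theorem integral_turn_eq_alternating_sum_arcs (hc : IsOrientationMultiple K c)
    (hθ : StrictMono θ) (hturn : θ (Fin.last n) < θ 0 + 2 * π) :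
    ∫ ψ in θ 0..θ 0 + 2 * π,
        c (Fin.cons (Complex.exp (ψ * Complex.I)) fun j ↦ Complex.exp (θ j * Complex.I)) =
      K * ∑ j : Fin (n + 1),
        (-1) ^ (j + 1 : ℕ) * (arcEndpoints θ j.succ - arcEndpoints θ j.castSucc) := by
  have const_on_arcs := (intervalIntegrable_and_integral_eq_sum_of_eqOn_const
    (strictMono_arcEndpoints hθ hturn).monotone fun j ψ hψ ↦
      hc.apply_cons j.succ (cyclicallyOriented_insertNth_of_mem_arc hθ hturn j hψ)).2
  rw [arcEndpoints_zero, arcEndpoints_last] at const_on_arcs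
  rw [const_on_arcs, Finset.mul_sum]
  refine Finset.sum_congr rfl fun j _ ↦ ?_
  rw [smul_eq_mul, Fin.val_succ]
  ring

theorem basic_integral_I1_general (hn : Odd n) (hc : IsOrientationMultiple K c)
    (hθ : StrictMono θ) (hturn : θ (Fin.last n) < θ 0 + 2 * π) :
    (1 / (2 * π)) * ∫ ψ in (0 : ℝ)..(2 * π),
        c (Fin.cons (Complex.exp (ψ * Complex.I)) fun j ↦ Complex.exp (θ j * Complex.I)) =
      K / π * (∑ j : Fin (n + 1), (-1) ^ (j : ℕ) * θ j + π) := by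
  have shift_turn := (periodic_exp_ofReal_mul_I.comp fun w ↦
    c (Fin.cons w fun j ↦ Complex.exp (θ j * Complex.I))).intervalIntegral_add_eq 0 (θ 0)
  simp only [zero_add, Function.comp_apply] at shift_turn
  rw [shift_turn, integral_turn_eq_alternating_sum_arcs hc hθ hturn, sum_neg_one_pow_mul_sub_succ,
    hn.add_one.neg_one_pow, arcEndpoints_last, arcEndpoints_zero]
  simp only [arcEndpoints_castSucc]
  field_simp
  ring

end Integral

/-- **Basic integral I₁.** For `0 ≤ θ₀ < θ₁ < θ₂ < θ₃ < 2π`,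
`⨍ c(e^{iψ}, e^{iθ₀}, e^{iθ₁}, e^{iθ₂}, e^{iθ₃}) dψ = -(ζ(2)/(2π))·(θ₀-θ₁+θ₂-θ₃+π)`. -/
theorem basic_integral_I1 (c : (Fin 5 → ℂ) → ℝ) (hc : OrientationProp c)
    (θ₀ θ₁ θ₂ θ₃ : ℝ) (h0 : 0 ≤ θ₀) (h01 : θ₀ < θ₁) (h12 : θ₁ < θ₂) (h23 : θ₂ < θ₃)
    (h3 : θ₃ < 2 * π) :
    (1 / (2 * π)) * ∫ ψ in (0:ℝ)..(2 * π),
        c ![Complex.exp (ψ * Complex.I), Complex.exp (θ₀ * Complex.I),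
            Complex.exp (θ₁ * Complex.I), Complex.exp (θ₂ * Complex.I),
            Complex.exp (θ₃ * Complex.I)]
      = -(π ^ 2 / 6 / (2 * π)) * (θ₀ - θ₁ + θ₂ - θ₃ + π) := by
  have hθ : StrictMono ![θ₀, θ₁, θ₂, θ₃] :=
    ((strictMono_vecEmpty.vecCons h23).vecCons h12).vecCons h01
  have hturn : θ₃ < θ₀ + 2 * π := by linarith
  have alternating_sum : ∑ j : Fin (3 + 1), (-1) ^ (j : ℕ) * ![θ₀, θ₁, θ₂, θ₃] j =
      θ₀ - θ₁ + θ₂ - θ₃ :=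
    (Fin.sum_univ_four _).trans <|
      show (-1) ^ 0 * θ₀ + (-1) ^ 1 * θ₁ + (-1) ^ 2 * θ₂ + (-1) ^ 3 * θ₃ = _ by ring
  convert basic_integral_I1_general (by decide) hc hθ hturn using 1
  · congr! with ψ j
    fin_cases j <;> rfl
  · rw [alternating_sum]
    ring
end

section
/- Let 0 < θ₁ < θ₂ < 2π. Then the iterated average (1/2π)²·∫₀^{2π}∫₀^{2π} e^{iη}·c(e^{iψ}, e^{iη}, 1, e^{iθ₁}, e^{iθ₂}) dη dψ equals −i·(ζ(2)/(2π²))·((e^{iθ₂} − 1)(θ₁ − π) − (e^{iθ₁} − 1)(θ₂ − π) − π). -/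
open Real Complex

/-!
For four points of a linear order, the product of the six signs `s_ij = sgn (x_j - x_i)` is the
Pfaffian `s₀₁ s₂₃ - s₀₂ s₁₃ + s₀₃ s₁₂` of the sign matrix. Cutting the circle at `1`, this product
for the angles `ψ, η, θ₁, θ₂` is the orientation sign of `(e^{iψ}, e^{iη}, 1, e^{iθ₁}, e^{iθ₂})`.
Every term of the Pfaffian contains `η` and `ψ` in separate factors, apart from `sgn (η - ψ)`
itself, so the double integral reduces to integrals against a single sign, namely
`∫₀^{2π} sgn (η - p) e^{iη} dη = 2i (e^{ip} - 1)` and `∫₀^{2π} sgn (ψ - p) dψ = 2π - 2p`.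
-/

open MeasureTheory Set

section OrderSign

variable {α : Type*} [LinearOrder α]

/-- The sign of `y - x`, which makes sense for points of any linear order: `1` if `x < y`, `-1` if
`y < x` and `0` if `x = y`. -/
noncomputable def orderSign (x y : α) : ℝ :=
  if x < y then 1 else if y < x then -1 else 0

lemma orderSign_of_lt {x y : α} (h : x < y) : orderSign x y = 1 := by
  simp [orderSign, h]

lemma orderSign_of_gt {x y : α} (h : y < x) : orderSign x y = -1 := by
  simp [orderSign, h, h.not_gt]

lemma orderSign_self (x : α) : orderSign x x = 0 := by
  simp [orderSign]

lemma orderSign_swap (x y : α) : orderSign x y = -orderSign y x := by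
  rcases lt_trichotomy x y with h | rfl | h
  · rw [orderSign_of_lt h, orderSign_of_gt h, neg_neg]
  · rw [orderSign_self, neg_zero]
  · rw [orderSign_of_gt h, orderSign_of_lt h]

lemma orderSign_mul_orderSign_mul_orderSign (x y z : α) :
    orderSign x y * orderSign y z * orderSign x z =
      orderSign x y + orderSign y z - orderSign x z := by
  unfold orderSign
  grind

/-- The sign of the ordering of a tuple: the product of the signs of `x j - x i` over `i < j`. -/
noncomputable def tupleSign {n : ℕ} (x : Fin n → α) : ℝ :=
  ∏ i, ∏ j ∈ Finset.Ioi i, orderSign (x i) (x j)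

lemma tupleSign_of_strictMono {n : ℕ} {x : Fin n → α} (hx : StrictMono x) : tupleSign x = 1 :=
  Finset.prod_eq_one fun _ _ => Finset.prod_eq_one fun _ hj =>
    orderSign_of_lt (hx (Finset.mem_Ioi.mp hj))

lemma tupleSign_comp_perm {n : ℕ} (x : Fin n → α) (σ : Equiv.Perm (Fin n)) :
    tupleSign (x ∘ σ) = (Equiv.Perm.sign σ : ℤ) * tupleSign x :=
  σ.prod_Ioi_comp_eq_sign_mul_prod fun i j => orderSign_swap (x i) (x j)

lemma sign_eq_tupleSign_of_strictMono_comp {n : ℕ} {x : Fin n → α} {σ : Equiv.Perm (Fin n)}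
    (hσ : StrictMono (x ∘ σ)) : ((Equiv.Perm.sign σ : ℤ) : ℝ) = tupleSign x := by
  have hmul : 1 = ((Equiv.Perm.sign σ : ℤ) : ℝ) * tupleSign x := by
    rw [← tupleSign_comp_perm, tupleSign_of_strictMono hσ]
  rcases Int.units_eq_one_or (Equiv.Perm.sign σ) with h | h <;>
    rw [h] at hmul ⊢ <;> push_cast at hmul ⊢ <;> linarith

lemma tupleSign_vecCons {n : ℕ} (a : α) (x : Fin n → α) :
    tupleSign (Matrix.vecCons a x) = (∏ j, orderSign a (x j)) * tupleSign x := by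
  simp [tupleSign, Fin.prod_univ_succ, Fin.prod_Ioi_succ]

lemma tupleSign_fin_zero (x : Fin 0 → α) : tupleSign x = 1 :=
  Fin.prod_univ_zero _

lemma tupleSign_four_eq_pfaffian (x₀ x₁ x₂ x₃ : α) :
    tupleSign ![x₀, x₁, x₂, x₃] = orderSign x₀ x₁ * orderSign x₂ x₃ -
      orderSign x₀ x₂ * orderSign x₁ x₃ + orderSign x₀ x₃ * orderSign x₁ x₂ := by
  have h₀₁₂ := orderSign_mul_orderSign_mul_orderSign x₀ x₁ x₂
  have h₀₁₃ := orderSign_mul_orderSign_mul_orderSign x₀ x₁ x₃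
  have h₀₂₃ := orderSign_mul_orderSign_mul_orderSign x₀ x₂ x₃
  have h₁₂₃ := orderSign_mul_orderSign_mul_orderSign x₁ x₂ x₃
  simp only [tupleSign_vecCons, tupleSign_fin_zero, Fin.prod_univ_succ, Fin.prod_univ_zero,
    Matrix.cons_val_zero, Matrix.cons_val_succ, mul_one]
  linear_combination orderSign x₀ x₃ * orderSign x₁ x₃ * orderSign x₂ x₃ * h₀₁₂ +
    orderSign x₂ x₃ * h₀₁₃ - orderSign x₁ x₃ * h₀₂₃ + orderSign x₀ x₃ * h₁₂₃

lemma tupleSign_insert_min {m x₀ x₁ x₂ x₃ : α} (h₀ : m < x₀) (h₁ : m < x₁) (h₂ : m < x₂)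
    (h₃ : m < x₃) : tupleSign ![x₀, x₁, m, x₂, x₃] = tupleSign ![x₀, x₁, x₂, x₃] := by
  simp [tupleSign_vecCons, Fin.prod_univ_succ, orderSign_of_gt h₀, orderSign_of_gt h₁,
    orderSign_of_lt h₂, orderSign_of_lt h₃]

end OrderSign

section OrderSignIntegral

variable {E : Type*} [NormedAddCommGroup E] [NormedSpace ℝ E] {μ : Measure ℝ}
  [NullSingletonClass μ] {f : ℝ → E} {a b p : ℝ}

lemma eqOn_orderSign_smul_left (hap : a ≤ p) :
    EqOn (fun x => -f x) (fun x => orderSign p x • f x) (uIoo a p) := fun x hx => by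
  rw [uIoo_of_le hap] at hx
  simp only [orderSign_of_gt hx.2, neg_one_smul]

lemma eqOn_orderSign_smul_right (hpb : p ≤ b) :
    EqOn f (fun x => orderSign p x • f x) (uIoo p b) := fun x hx => by
  rw [uIoo_of_le hpb] at hx
  simp only [orderSign_of_lt hx.1, one_smul]

lemma intervalIntegrable_orderSign_smul_left (hf : IntervalIntegrable f μ a b)
    (hp : p ∈ Icc a b) : IntervalIntegrable (fun x => orderSign p x • f x) μ a p :=
  (hf.mono_set (uIcc_subset_uIcc_left (Icc_subset_uIcc hp))).neg.congr_uIoo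
    (eqOn_orderSign_smul_left hp.1)

lemma intervalIntegrable_orderSign_smul_right (hf : IntervalIntegrable f μ a b)
    (hp : p ∈ Icc a b) : IntervalIntegrable (fun x => orderSign p x • f x) μ p b :=
  (hf.mono_set (uIcc_subset_uIcc_right (Icc_subset_uIcc hp))).congr_uIoo
    (eqOn_orderSign_smul_right hp.2)

lemma intervalIntegrable_orderSign_smul (hf : IntervalIntegrable f μ a b) (hp : p ∈ Icc a b) :
    IntervalIntegrable (fun x => orderSign p x • f x) μ a b :=
  (intervalIntegrable_orderSign_smul_left hf hp).trans
    (intervalIntegrable_orderSign_smul_right hf hp)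

lemma integral_orderSign_smul (hf : IntervalIntegrable f μ a b) (hp : p ∈ Icc a b) :
    ∫ x in a..b, orderSign p x • f x ∂μ = (∫ x in p..b, f x ∂μ) - ∫ x in a..p, f x ∂μ := by
  rw [← intervalIntegral.integral_add_adjacent_intervals
      (intervalIntegrable_orderSign_smul_left hf hp)
      (intervalIntegrable_orderSign_smul_right hf hp),
    ← intervalIntegral.integral_congr_uIoo (eqOn_orderSign_smul_left hp.1),
    ← intervalIntegral.integral_congr_uIoo (eqOn_orderSign_smul_right hp.2),
    intervalIntegral.integral_neg]
  abel

lemma integral_orderSign_smul_const [CompleteSpace E] (hp : p ∈ Icc a b) (v : E) :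
    ∫ x in a..b, orderSign p x • v = (a + b - 2 * p) • v := by
  rw [integral_orderSign_smul intervalIntegrable_const hp, intervalIntegral.integral_const,
    intervalIntegral.integral_const]
  module

end OrderSignIntegral

lemma integral_exp_ofReal_mul_I (a b : ℝ) :
    ∫ x in a..b, Complex.exp (x * Complex.I) =
      -Complex.I * (Complex.exp (b * Complex.I) - Complex.exp (a * Complex.I)) := by
  simp_rw [mul_comm _ Complex.I, integral_exp_mul_complex Complex.I_ne_zero, div_eq_inv_mul,
    Complex.inv_I]

lemma integral_orderSign_smul_exp {p : ℝ} (hp : p ∈ Icc 0 (2 * π)) :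
    ∫ η in (0 : ℝ)..2 * π, orderSign p η • Complex.exp (η * Complex.I) =
      2 * Complex.I * (Complex.exp (p * Complex.I) - 1) := by
  rw [integral_orderSign_smul (Continuous.intervalIntegrable (by fun_prop) _ _) hp,
    integral_exp_ofReal_mul_I, integral_exp_ofReal_mul_I]
  push_cast
  rw [Complex.exp_two_pi_mul_I, zero_mul, Complex.exp_zero]
  ring

lemma integral_tupleSign_smul_exp {ψ θ₁ θ₂ : ℝ} (hψ : ψ ∈ Icc 0 (2 * π))
    (hθ₁ : θ₁ ∈ Icc 0 (2 * π)) (hθ₂ : θ₂ ∈ Icc 0 (2 * π)) :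
    ∫ η in (0 : ℝ)..2 * π, tupleSign ![ψ, η, θ₁, θ₂] • Complex.exp (η * Complex.I) =
      (2 * Complex.I) * (orderSign θ₁ θ₂ • (Complex.exp (ψ * Complex.I) - 1) -
        orderSign θ₁ ψ • (Complex.exp (θ₂ * Complex.I) - 1) +
        orderSign θ₂ ψ • (Complex.exp (θ₁ * Complex.I) - 1)) := by
  have expand (η : ℝ) : tupleSign ![ψ, η, θ₁, θ₂] • Complex.exp (η * Complex.I) =
      orderSign θ₁ θ₂ • orderSign ψ η • Complex.exp (η * Complex.I) -
        orderSign θ₁ ψ • orderSign θ₂ η • Complex.exp (η * Complex.I) +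
        orderSign θ₂ ψ • orderSign θ₁ η • Complex.exp (η * Complex.I) := by
    rw [tupleSign_four_eq_pfaffian, orderSign_swap ψ θ₁, orderSign_swap ψ θ₂,
      orderSign_swap η θ₁, orderSign_swap η θ₂]
    module
  have integrable {p : ℝ} (hp : p ∈ Icc 0 (2 * π)) (r : ℝ) : IntervalIntegrable
      (fun η : ℝ => r • orderSign p η • Complex.exp (η * Complex.I)) volume 0 (2 * π) :=
    (intervalIntegrable_orderSign_smul (Continuous.intervalIntegrable (by fun_prop) _ _) hp).smul r
  simp_rw [expand]
  rw [intervalIntegral.integral_add ((integrable hψ _).sub (integrable hθ₂ _)) (integrable hθ₁ _),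
    intervalIntegral.integral_sub (integrable hψ _) (integrable hθ₂ _)]
  simp_rw [intervalIntegral.integral_smul]
  rw [integral_orderSign_smul_exp hψ, integral_orderSign_smul_exp hθ₁,
    integral_orderSign_smul_exp hθ₂]
  simp only [Complex.real_smul]
  ring

lemma integral_integral_tupleSign_smul_exp {θ₁ θ₂ : ℝ} (hθ₁ : θ₁ ∈ Icc 0 (2 * π))
    (hθ₂ : θ₂ ∈ Icc 0 (2 * π)) :
    ∫ ψ in (0 : ℝ)..2 * π, ∫ η in (0 : ℝ)..2 * π,
        tupleSign ![ψ, η, θ₁, θ₂] • Complex.exp (η * Complex.I) =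
      4 * Complex.I * ((Complex.exp (θ₂ * Complex.I) - 1) * ((θ₁ - π : ℝ) : ℂ) -
        (Complex.exp (θ₁ * Complex.I) - 1) * ((θ₂ - π : ℝ) : ℂ) -
        ((orderSign θ₁ θ₂ * π : ℝ) : ℂ)) := by
  have inner : EqOn _ _ (uIcc 0 (2 * π)) := fun ψ hψ =>
    integral_tupleSign_smul_exp (uIcc_of_le Real.two_pi_pos.le ▸ hψ) hθ₁ hθ₂
  have integrable_exp : IntervalIntegrable (fun ψ : ℝ => orderSign θ₁ θ₂ •
      (Complex.exp (ψ * Complex.I) - 1)) volume 0 (2 * π) :=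
    Continuous.intervalIntegrable (by fun_prop) _ _
  have integrable {p : ℝ} (hp : p ∈ Icc 0 (2 * π)) (v : ℂ) :
      IntervalIntegrable (fun ψ => orderSign p ψ • v) volume 0 (2 * π) :=
    intervalIntegrable_orderSign_smul intervalIntegrable_const hp
  have integral_exp : ∫ ψ in (0 : ℝ)..2 * π, (Complex.exp (ψ * Complex.I) - 1) = -(2 * π) := by
    rw [intervalIntegral.integral_sub (Continuous.intervalIntegrable (by fun_prop) _ _)
      intervalIntegrable_const, integral_exp_ofReal_mul_I]
    simp [Complex.exp_two_pi_mul_I]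
  rw [intervalIntegral.integral_congr inner, intervalIntegral.integral_const_mul,
    intervalIntegral.integral_add (integrable_exp.sub (integrable hθ₁ _)) (integrable hθ₂ _),
    intervalIntegral.integral_sub integrable_exp (integrable hθ₁ _),
    intervalIntegral.integral_smul, integral_exp, integral_orderSign_smul_const hθ₁,
    integral_orderSign_smul_const hθ₂]
  simp only [Complex.real_smul]
  push_cast
  ring

lemma cyclicallyOriented_exp {k : ℕ} {a : ℝ} {x : Fin k → ℝ} (hx : StrictMono x)
    (hxa : ∀ i, x i ∈ Ico a (a + 2 * π)) :
    CyclicallyOriented fun i => Complex.exp (x i * Complex.I) :=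
  ⟨x, hx, fun i j => by linarith [(hxa i).1, (hxa j).2], fun _ => rfl⟩

namespace OrientationProp

variable {c : (Fin 5 → ℂ) → ℝ}

lemma apply_exp (hc : OrientationProp c) {a : ℝ} {x : Fin 5 → ℝ} (hx : Function.Injective x)
    (hxa : ∀ i, x i ∈ Ico a (a + 2 * π)) :
    c (fun i => Complex.exp (x i * Complex.I)) = -(π ^ 2 / 6 / 2) * tupleSign x := by
  have hsort : StrictMono (x ∘ Tuple.sort x) :=
    (Tuple.monotone_sort x).strictMono_of_injective (hx.comp (Tuple.sort x).injective)
  rw [hc _ (Tuple.sort x) (cyclicallyOriented_exp hsort fun _ => hxa _),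
    sign_eq_tupleSign_of_strictMono_comp hsort]

lemma apply_exp_insert_one (hc : OrientationProp c) {x₀ x₁ x₂ x₃ : ℝ}
    (h₀ : x₀ ∈ Ioo 0 (2 * π)) (h₁ : x₁ ∈ Ioo 0 (2 * π)) (h₂ : x₂ ∈ Ioo 0 (2 * π))
    (h₃ : x₃ ∈ Ioo 0 (2 * π)) (hx : Function.Injective ![x₀, x₁, x₂, x₃]) :
    c ![Complex.exp (x₀ * Complex.I), Complex.exp (x₁ * Complex.I), 1,
        Complex.exp (x₂ * Complex.I), Complex.exp (x₃ * Complex.I)] =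
      -(π ^ 2 / 6 / 2) * tupleSign ![x₀, x₁, x₂, x₃] := by
  have injective_insert : Function.Injective ![x₀, x₁, 0, x₂, x₃] := by
    simp only [Function.Injective, Fin.forall_fin_succ] at hx ⊢
    simp_all [h₀.1.ne, h₁.1.ne, h₂.1.ne, h₃.1.ne, h₀.1.ne', h₁.1.ne', h₂.1.ne', h₃.1.ne']
  have mem_Ico : ∀ i, ![x₀, x₁, 0, x₂, x₃] i ∈ Ico 0 (0 + 2 * π) := by
    rw [zero_add]
    simp [Fin.forall_fin_succ, h₀.1.le, h₀.2, h₁.1.le, h₁.2, h₂.1.le, h₂.2, h₃.1.le, h₃.2,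
      Real.pi_pos]
  rw [← tupleSign_insert_min h₀.1 h₁.1 h₂.1 h₃.1, ← hc.apply_exp injective_insert mem_Ico]
  congr 1
  ext i
  fin_cases i <;> simp

lemma integral_integral_exp_mul (hc : OrientationProp c) {θ₁ θ₂ : ℝ}
    (hθ₁ : θ₁ ∈ Ioo 0 (2 * π)) (hθ₂ : θ₂ ∈ Ioo 0 (2 * π)) (hne : θ₁ ≠ θ₂) :
    ∫ ψ in (0 : ℝ)..2 * π, ∫ η in (0 : ℝ)..2 * π, Complex.exp (η * Complex.I) *
        ((c ![Complex.exp (ψ * Complex.I), Complex.exp (η * Complex.I), 1,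
          Complex.exp (θ₁ * Complex.I), Complex.exp (θ₂ * Complex.I)] : ℝ) : ℂ) =
      ((-(π ^ 2 / 6 / 2) : ℝ) : ℂ) * ∫ ψ in (0 : ℝ)..2 * π, ∫ η in (0 : ℝ)..2 * π,
        tupleSign ![ψ, η, θ₁, θ₂] • Complex.exp (η * Complex.I) := by
  have ae_mem_Ioo : ∀ᵐ x : ℝ, x ∈ uIoc 0 (2 * π) → x ∈ Ioo 0 (2 * π) := by
    filter_upwards [volume.ae_ne (2 * π)] with x hx hmem
    rw [uIoc_of_le Real.two_pi_pos.le] at hmem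
    exact ⟨hmem.1, hmem.2.lt_of_ne hx⟩
  simp_rw [← intervalIntegral.integral_const_mul]
  refine intervalIntegral.integral_congr_ae ?_
  filter_upwards [ae_mem_Ioo, volume.ae_ne θ₁, volume.ae_ne θ₂] with ψ hψ hψθ₁ hψθ₂ hψmem
  refine intervalIntegral.integral_congr_ae ?_
  filter_upwards [ae_mem_Ioo, volume.ae_ne ψ, volume.ae_ne θ₁, volume.ae_ne θ₂]
    with η hη hηψ hηθ₁ hηθ₂ hηmem
  have hinj : Function.Injective ![ψ, η, θ₁, θ₂] := by
    simp [Function.Injective, Fin.forall_fin_succ, hηψ, hηψ.symm, hψθ₁, hψθ₁.symm, hψθ₂,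
      hψθ₂.symm, hηθ₁, hηθ₁.symm, hηθ₂, hηθ₂.symm, hne, hne.symm]
  rw [hc.apply_exp_insert_one (hψ hψmem) (hη hηmem) hθ₁ hθ₂ hinj, Complex.real_smul]
  push_cast
  ring

end OrientationProp

/-- **Basic integral I₂.** For `0 < θ₁ < θ₂ < 2π`,
`⨍⨍ e^{iη}·c(e^{iψ}, e^{iη}, 1, e^{iθ₁}, e^{iθ₂}) dη dψ
= -i·(ζ(2)/(2π²))·((e^{iθ₂}-1)(θ₁-π) - (e^{iθ₁}-1)(θ₂-π) - π)`. -/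
theorem basic_integral_I2 (c : (Fin 5 → ℂ) → ℝ) (hc : OrientationProp c)
    (θ₁ θ₂ : ℝ) (h1 : 0 < θ₁) (h12 : θ₁ < θ₂) (h2 : θ₂ < 2 * π) :
    (((1 / (2 * π)) ^ 2 : ℝ) : ℂ) *
        ∫ ψ in (0:ℝ)..(2 * π), ∫ η in (0:ℝ)..(2 * π),
          Complex.exp (η * Complex.I) *
            ((c ![Complex.exp (ψ * Complex.I), Complex.exp (η * Complex.I), 1,
                Complex.exp (θ₁ * Complex.I), Complex.exp (θ₂ * Complex.I)] : ℝ) : ℂ)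
      = -Complex.I * (((π ^ 2 / 6) / (2 * π ^ 2) : ℝ) : ℂ) *
          ((Complex.exp (θ₂ * Complex.I) - 1) * ((θ₁ - π : ℝ) : ℂ)
            - (Complex.exp (θ₁ * Complex.I) - 1) * ((θ₂ - π : ℝ) : ℂ) - ((π : ℝ) : ℂ)) := by
  have hθ₁ : θ₁ ∈ Ioo 0 (2 * π) := ⟨h1, h12.trans h2⟩
  have hθ₂ : θ₂ ∈ Ioo 0 (2 * π) := ⟨h1.trans h12, h2⟩
  rw [hc.integral_integral_exp_mul hθ₁ hθ₂ h12.ne, integral_integral_tupleSign_smul_exp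
    (Ioo_subset_Icc_self hθ₁) (Ioo_subset_Icc_self hθ₂), orderSign_of_lt h12]
  have hπ : (π : ℂ) ≠ 0 := Complex.ofReal_ne_zero.mpr Real.pi_ne_zero
  push_cast
  field_simp
  ring
end
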